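/- arXiv:1310.8021 — 2 statements merged into one kernel-verified Lean document; each statement's English description precedes it below -/
import Mathlib

section
/- Let P be an N×N transition matrix in the closure of the set of reversible Markov matrices with positive stationary distribution, reversible with respect to π, with all eigenvalues nonnegative: 0 ≤ β_1 ≤ ··· ≤ β_{N-1} < β_N = 1. Let μ be any probability distribution on the state space. Define μ_1 = μ and μ_{j+1} via μ_j P = β_j μ_j + (1 - β_j) μ_{j+1} for 1 ≤ j ≤ N-1 (equivalently μ_j = μ · Π_{i<j} (P - β_i I)/(1 - β_i)). Then each μ_j has total mass 1, μ_N = π, and each μ_j has nonnegative entries (is a probability distribution). -/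
/-- The closure (in the space of `N × N` real matrices) of the set of Markov
transition matrices reversible with respect to a strictly positive stationary
distribution. -/
def RevClosure (N : ℕ) : Set (Matrix (Fin N) (Fin N) ℝ) :=
  closure {M | (∀ i j, 0 ≤ M i j) ∧ (∀ i, ∑ j, M i j = 1) ∧
    ∃ p : Fin N → ℝ, (∀ i, 0 < p i) ∧ (∑ i, p i = 1) ∧
      ∀ i j, p i * M i j = p j * M j i}

/-!
For a symmetric matrix `A` with eigenvalues `ν 0 ≥ ν 1 ≥ ⋯ ≥ ν (n - 1)`, the coefficients of the
adjugate of `X - A` in the Newton basis `∏ i < j, (X - ν i)` are the products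
`∏ j < i < n, (A - ν i)`. If `A` is entrywise nonnegative, so are these coefficients (the theorem of
Micchelli and Willoughby), by induction on the size: each column of the adjugate is built from
the characteristic polynomial and the adjugate of a principal submatrix, whose eigenvalues are
bounded by those of `A` (Cauchy interlacing), and lowering the nodes of a Newton polynomial leaves
it a nonnegative combination of the Newton polynomials of `A`.

A reversible matrix is diagonally similar to a symmetric one, and the property passes to limits
because the eigenvalues of stochastic matrices stay in `[-1, 1]`. By the recursion, `μ_j` is a
positive multiple of `μ ∏ i < j, (P - β_i)`, hence nonnegative. For `j = N`, Cayley–Hamilton shows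
that `μ_N` is fixed by `P`, and `1` is a simple eigenvalue, so `μ_N = π`.
-/

section

open Finset Lagrange Matrix Polynomial

lemma nodal_range_succ {R : Type*} [CommRing R] (ν : ℕ → R) (k : ℕ) :
    nodal (range (k + 1)) ν = (X - C (ν k)) * nodal (range k) ν := by
  rw [range_add_one, nodal_insert_eq_nodal notMem_range_self]

section NewtonBasis

variable {R : Type*} [CommRing R] [IsDomain R]

/-- The Newton polynomials with nodes `ν 0, ν 1, …`, as a sequence of polynomials of degrees
`0, 1, …`. -/
noncomputable def newtonSequence (ν : ℕ → R) : Polynomial.Sequence R where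
  elems' k := nodal (range k) ν
  degree_eq' k := by simp

lemma isUnit_leadingCoeff_newtonSequence (ν : ℕ → R) (k : ℕ) :
    IsUnit (newtonSequence ν k).leadingCoeff := by
  change IsUnit (nodal (range k) ν).leadingCoeff
  simp [nodal_monic.leadingCoeff]

/-- The basis of `R[X]` formed by the Newton polynomials, used to read off the coefficients of an
element of `newtonCone` below. -/
noncomputable def newtonBasis (ν : ℕ → R) : Module.Basis ℕ R R[X] :=
  (newtonSequence ν).basis (isUnit_leadingCoeff_newtonSequence ν)

lemma newtonBasis_apply (ν : ℕ → R) (k : ℕ) : newtonBasis ν k = nodal (range k) ν :=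
  (newtonSequence ν).basis_eq_self (isUnit_leadingCoeff_newtonSequence ν) k

end NewtonBasis

section NewtonCone

variable {R : Type*} [CommRing R] [PartialOrder R] [IsOrderedRing R] {ν η : ℕ → R} {n : ℕ}

/-- The cone of nonnegative combinations of the first `n` Newton polynomials
`∏ i < k, (X - ν i)`, `k < n`. -/
noncomputable def newtonCone (ν : ℕ → R) (n : ℕ) : PointedCone R R[X] :=
  PointedCone.hull R ((fun k => nodal (range k) ν) '' Set.Iio n)

lemma nodal_range_mem_newtonCone {k : ℕ} (h : k < n) : nodal (range k) ν ∈ newtonCone ν n :=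
  Submodule.subset_span ⟨k, h, rfl⟩

lemma newtonCone_mono (ν : ℕ → R) : Monotone (newtonCone ν) := fun _ _ h =>
  Submodule.span_mono (Set.image_mono (Set.Iio_subset_Iio h))

lemma C_mul_mem_newtonCone {p : R[X]} (hp : p ∈ newtonCone ν n) {a : R} (ha : 0 ≤ a) :
    C a * p ∈ newtonCone ν n := by
  rw [← smul_eq_C_mul]
  exact (newtonCone ν n).smul_mem ha hp

lemma X_sub_C_mul_mem_newtonCone {p : R[X]} (hp : p ∈ newtonCone ν n) {a : R}
    (ha : ∀ i < n, a ≤ ν i) : (X - C a) * p ∈ newtonCone ν (n + 1) := by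
  induction hp using Submodule.span_induction with
  | mem _ hp =>
    obtain ⟨k, hk : k < n, rfl⟩ := hp
    have expand : (X - C a) * nodal (range k) ν =
        nodal (range (k + 1)) ν + C (ν k - a) * nodal (range k) ν := by
      rw [nodal_range_succ, C_sub]
      ring
    rw [expand]
    exact add_mem (nodal_range_mem_newtonCone (by omega))
      (C_mul_mem_newtonCone (nodal_range_mem_newtonCone (by omega)) (sub_nonneg.mpr (ha k hk)))
  | zero => simp
  | add p q _ _ hp hq => rw [mul_add]; exact add_mem hp hq
  | smul c p _ hp => rw [mul_smul_comm]; exact Submodule.smul_mem _ c hp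

lemma nodal_range_mem_newtonCone_of_le (hν : AntitoneOn ν (Set.Iio n)) (hη : ∀ i < n, η i ≤ ν i)
    {k : ℕ} (hk : k ≤ n) : nodal (range k) η ∈ newtonCone ν (k + 1) := by
  induction k with
  | zero => simpa using nodal_range_mem_newtonCone (ν := ν) one_pos
  | succ k ih =>
    rw [nodal_range_succ]
    refine X_sub_C_mul_mem_newtonCone (ih (by omega)) fun i hi => ?_
    exact (hη k hk).trans (hν (Set.mem_Iio.mpr (by omega)) hk (by omega))

lemma newtonCone_le_newtonCone_of_le (hν : AntitoneOn ν (Set.Iio n)) (hη : ∀ i < n, η i ≤ ν i) :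
    newtonCone η n ≤ newtonCone ν n := by
  refine Submodule.span_le.mpr ?_
  rintro _ ⟨k, hk : k < n, rfl⟩
  exact newtonCone_mono ν hk (nodal_range_mem_newtonCone_of_le hν hη hk.le)

variable [IsDomain R]

lemma newtonBasis_repr_nonneg {p : R[X]} (hp : p ∈ newtonCone ν n) (j : ℕ) :
    0 ≤ (newtonBasis ν).repr p j := by
  induction hp using Submodule.span_induction with
  | mem _ hp =>
    obtain ⟨k, -, rfl⟩ := hp
    beta_reduce
    rw [← newtonBasis_apply, Module.Basis.repr_self]
    exact Finsupp.single_nonneg.mpr zero_le_one j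
  | zero => simp
  | add p q _ _ hp hq => simpa using add_nonneg hp hq
  | smul c p _ hp =>
    have hsmul : c • p = (c : R) • p := rfl
    rw [hsmul, map_smul, Finsupp.smul_apply]
    exact mul_nonneg c.2 hp

lemma nonneg_of_sum_smul_nodal_mem_newtonCone {c : ℕ → R}
    (h : ∑ j ∈ range n, c j • nodal (range j) ν ∈ newtonCone ν n) {j : ℕ} (hj : j < n) :
    0 ≤ c j := by
  have hrepr := newtonBasis_repr_nonneg h j
  simp_rw [← newtonBasis_apply, map_sum, map_smul, Module.Basis.repr_self] at hrepr
  simpa [Finsupp.single_apply, hj] using hrepr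

end NewtonCone

section CharacteristicMatrix

variable {R : Type*} [CommRing R]

section

variable {ι : Type*} [Fintype ι] [DecidableEq ι] (A : Matrix ι ι R)

lemma eq_adjugate_charmatrix_mulVec_of_charmatrix_mulVec_eq {v w : ι → R[X]}
    (h : A.charmatrix *ᵥ v = A.charpoly • w) : v = A.charmatrix.adjugate *ᵥ w := by
  have hsmul : A.charpoly • v = A.charpoly • A.charmatrix.adjugate *ᵥ w := by
    rw [← mulVec_smul, ← h, mulVec_mulVec, adjugate_mul, smul_mulVec, one_mulVec, charpoly]
  exact funext fun i => A.charpoly_monic.isRegular.left (congrFun hsmul i)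

lemma charmatrix_mul_sum_nodal_smul (ν : ℕ → R) (n : ℕ) :
    A.charmatrix * ∑ j ∈ range n,
        nodal (range j) ν • (aeval A (nodal (Ico (j + 1) n) ν)).map C =
      nodal (range n) ν • 1 - (aeval A (nodal (range n) ν)).map C := by
  let D (j : ℕ) : Matrix ι ι R[X] :=
    nodal (range j) ν • (aeval A (nodal (Ico j n) ν)).map C
  have step : ∀ j ∈ range n, A.charmatrix *
      (nodal (range j) ν • (aeval A (nodal (Ico (j + 1) n) ν)).map C) = D (j + 1) - D j := by
    intro j hj
    have hD : (aeval A (nodal (Ico j n) ν)).map C =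
        (A.map C - C (ν j) • 1) * (aeval A (nodal (Ico (j + 1) n) ν)).map C := by
      rw [nodal, prod_eq_prod_Ico_succ_bot (mem_range.mp hj), ← nodal, map_mul, Matrix.map_mul]
      congr 1
      ext x y : 2
      simp [algebraMap_matrix_apply, one_apply, apply_ite C]
    have hX : A.charmatrix = (X : R[X]) • 1 - A.map C := by
      rw [charmatrix, scalar_apply, smul_one_eq_diagonal, RingHom.mapMatrix_apply]
    simp only [D, hD, hX, nodal_range_succ, sub_mul, smul_mul_assoc, one_mul, mul_smul_comm,
      smul_sub, sub_smul, smul_smul]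
    module
  rw [Finset.mul_sum, sum_congr rfl step, sum_range_sub]
  simp [D]

variable {A} in
lemma adjugate_charmatrix_eq_sum_nodal_smul {ν : ℕ → R} {n : ℕ}
    (hA : A.charpoly = nodal (range n) ν) :
    A.charmatrix.adjugate = ∑ j ∈ range n,
      nodal (range j) ν • (aeval A (nodal (Ico (j + 1) n) ν)).map C := by
  have hmul := charmatrix_mul_sum_nodal_smul A ν n
  rw [← hA, aeval_self_charpoly, Matrix.map_zero _ (map_zero C), sub_zero] at hmul
  refine Matrix.ext_col fun y => ?_
  rw [← mulVec_single_one, ← mulVec_single_one]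
  refine (eq_adjugate_charmatrix_mulVec_of_charmatrix_mulVec_eq A ?_).symm
  rw [mulVec_mulVec, hmul, smul_mulVec, one_mulVec]

end

variable {n : ℕ} (A : Matrix (Fin (n + 1)) (Fin (n + 1)) R) (r : Fin (n + 1))

lemma charmatrix_submatrix_succAbove :
    A.charmatrix.submatrix r.succAbove r.succAbove =
      (A.submatrix r.succAbove r.succAbove).charmatrix := by
  ext i j : 1
  simp [charmatrix_apply, diagonal_apply]

lemma adjugate_charmatrix_apply_self :
    A.charmatrix.adjugate r r = (A.submatrix r.succAbove r.succAbove).charpoly := by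
  rw [adjugate_fin_succ_eq_det_submatrix, charmatrix_submatrix_succAbove, ← two_mul, pow_mul]
  simp [charpoly]

lemma adjugate_charmatrix_apply_succAbove (i : Fin n) :
    A.charmatrix.adjugate (r.succAbove i) r =
      ∑ l, C (A (r.succAbove l) r) *
          (A.submatrix r.succAbove r.succAbove).charmatrix.adjugate i l := by
  set B := A.submatrix r.succAbove r.succAbove
  have hcol : B.charmatrix *ᵥ (fun m => A.charmatrix.adjugate (r.succAbove m) r) =
      B.charpoly • fun l => C (A (r.succAbove l) r) := by
    ext1 l
    have h := congrFun₂ (mul_adjugate A.charmatrix) (r.succAbove l) r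
    rw [Matrix.mul_apply, Fin.sum_univ_succAbove _ r, adjugate_charmatrix_apply_self,
      Matrix.smul_apply, one_apply_ne (Fin.succAbove_ne r l), smul_zero,
      charmatrix_apply_ne _ _ _ (Fin.succAbove_ne r l)] at h
    rw [← charmatrix_submatrix_succAbove]
    simp only [mulVec, dotProduct, submatrix_apply, Pi.smul_apply, smul_eq_mul]
    linear_combination h
  rw [congrFun (eq_adjugate_charmatrix_mulVec_of_charmatrix_mulVec_eq B hcol) i]
  simp only [mulVec, dotProduct, mul_comm]

end CharacteristicMatrix

section Interlacing

lemma exists_ne_zero_repr_eq_zero {K E F : Type*} [Field K] [AddCommGroup E] [Module K E]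
    [AddCommGroup F] [Module K F] {n m : ℕ} (b : Module.Basis (Fin n) K E)
    (c : Module.Basis (Fin m) K F) (V : F →ₗ[K] E) {k : ℕ} (hkm : k < m) (hkn : k < n) :
    ∃ y ≠ 0, (∀ i > ⟨k, hkm⟩, c.repr y i = 0) ∧ ∀ i < ⟨k, hkn⟩, b.repr (V y) i = 0 := by
  have := c.finiteDimensional_of_finite
  let I := Finset.Ioi (⟨k, hkm⟩ : Fin m)
  let J := Finset.Iio (⟨k, hkn⟩ : Fin n)
  let φ : F →ₗ[K] (I → K) × (J → K) :=
    (LinearMap.pi fun i : I => c.coord i).prod (LinearMap.pi fun i : J => b.coord i ∘ₗ V)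
  have hfinrank : Module.finrank K ((I → K) × (J → K)) < Module.finrank K F := by
    simp only [Module.finrank_prod, Module.finrank_fintype_fun_eq_card, Fintype.card_coe,
      Module.finrank_eq_card_basis c, Fintype.card_fin, I, J, Fin.card_Ioi, Fin.card_Iio]
    omega
  obtain ⟨y, hy, hy0⟩ := (Submodule.ne_bot_iff _).mp (LinearMap.ker_ne_bot_of_finrank_lt hfinrank)
  obtain ⟨hlow, hupp⟩ := Prod.mk_eq_zero.mp (show φ y = 0 from hy)
  exact ⟨y, hy0, fun i hi => congrFun hlow ⟨i, Finset.mem_Ioi.mpr hi⟩,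
    fun i hi => congrFun hupp ⟨i, Finset.mem_Iio.mpr hi⟩⟩

variable {𝕜 E F : Type*} [RCLike 𝕜] [NormedAddCommGroup E] [InnerProductSpace 𝕜 E]
  [FiniteDimensional 𝕜 E] [NormedAddCommGroup F] [InnerProductSpace 𝕜 F] [FiniteDimensional 𝕜 F]
  {T : E →ₗ[𝕜] E} {S : F →ₗ[𝕜] F} {n m : ℕ}

lemma re_inner_apply_self_eq_sum (hT : T.IsSymmetric) (hn : Module.finrank 𝕜 E = n) (x : E) :
    RCLike.re (inner 𝕜 x (T x)) =
      ∑ i, hT.eigenvalues hn i * ‖(hT.eigenvectorBasis hn).repr x i‖ ^ 2 := by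
  rw [← (hT.eigenvectorBasis hn).sum_inner_mul_inner x (T x), map_sum]
  refine sum_congr rfl fun i _ => ?_
  rw [← OrthonormalBasis.repr_apply_apply, hT.eigenvectorBasis_apply_self_apply,
    ← inner_conj_symm, ← OrthonormalBasis.repr_apply_apply, mul_left_comm, RCLike.conj_mul]
  norm_cast

lemma re_inner_apply_self_le (hT : T.IsSymmetric) (hn : Module.finrank 𝕜 E = n) {k : Fin n}
    {x : E} (hx : ∀ i < k, (hT.eigenvectorBasis hn).repr x i = 0) :
    RCLike.re (inner 𝕜 x (T x)) ≤ hT.eigenvalues hn k * ‖x‖ ^ 2 := by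
  rw [re_inner_apply_self_eq_sum hT hn, ← (hT.eigenvectorBasis hn).sum_sq_norm_inner_right x,
    Finset.mul_sum]
  refine sum_le_sum fun i _ => ?_
  rw [← OrthonormalBasis.repr_apply_apply]
  rcases lt_or_ge i k with hi | hi
  · simp [hx i hi]
  · exact mul_le_mul_of_nonneg_right (hT.eigenvalues_antitone hn hi) (sq_nonneg _)

lemma le_re_inner_apply_self (hT : T.IsSymmetric) (hn : Module.finrank 𝕜 E = n) {k : Fin n}
    {x : E} (hx : ∀ i > k, (hT.eigenvectorBasis hn).repr x i = 0) :
    hT.eigenvalues hn k * ‖x‖ ^ 2 ≤ RCLike.re (inner 𝕜 x (T x)) := by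
  rw [re_inner_apply_self_eq_sum hT hn, ← (hT.eigenvectorBasis hn).sum_sq_norm_inner_right x,
    Finset.mul_sum]
  refine sum_le_sum fun i _ => ?_
  rw [← OrthonormalBasis.repr_apply_apply]
  rcases lt_or_ge k i with hi | hi
  · simp [hx i hi]
  · exact mul_le_mul_of_nonneg_right (hT.eigenvalues_antitone hn hi) (sq_nonneg _)

lemma eigenvalues_le_eigenvalues_of_re_inner_le (hT : T.IsSymmetric)
    (hn : Module.finrank 𝕜 E = n) (hS : S.IsSymmetric) (hm : Module.finrank 𝕜 F = m)
    (V : F →ₗᵢ[𝕜] E)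
    (hV : ∀ y, RCLike.re (inner 𝕜 y (S y)) ≤ RCLike.re (inner 𝕜 (V y) (T (V y))))
    {k : ℕ} (hkm : k < m) (hkn : k < n) :
    hS.eigenvalues hm ⟨k, hkm⟩ ≤ hT.eigenvalues hn ⟨k, hkn⟩ := by
  obtain ⟨y, hy0, hlow, hupp⟩ := exists_ne_zero_repr_eq_zero
    (hT.eigenvectorBasis hn).toBasis (hS.eigenvectorBasis hm).toBasis V.toLinearMap hkm hkn
  have hle : hS.eigenvalues hm ⟨k, hkm⟩ * ‖y‖ ^ 2 ≤ hT.eigenvalues hn ⟨k, hkn⟩ * ‖V y‖ ^ 2 :=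
    calc
      _ ≤ RCLike.re (inner 𝕜 y (S y)) := le_re_inner_apply_self hS hm hlow
      _ ≤ RCLike.re (inner 𝕜 (V y) (T (V y))) := hV y
      _ ≤ _ := re_inner_apply_self_le hT hn hupp
  rw [V.norm_map] at hle
  exact le_of_mul_le_mul_right hle (by positivity)

variable {ι κ : Type*} [Fintype ι] [Fintype κ]

lemma sum_extend_zero {R M : Type*} [Zero R] [AddCommMonoid M] {f : κ → ι} (hf : f.Injective)
    (y : κ → R) {g : ι → R → M} (hg : ∀ i, g i 0 = 0) :
    ∑ i, g i (Function.extend f y 0 i) = ∑ l, g (f l) (y l) := by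
  refine (Fintype.sum_of_injective f hf _ _ (fun i hi => ?_) fun l => ?_).symm
  · rw [Function.extend_apply' _ _ _ hi, Pi.zero_apply, hg]
  · rw [hf.extend_apply]

/-- Extension by zero along an injective map, as an isometry of Euclidean spaces. -/
noncomputable def euclideanExtendByZero (𝕜 : Type*) [RCLike 𝕜] {f : κ → ι} (hf : f.Injective) :
    EuclideanSpace 𝕜 κ →ₗᵢ[𝕜] EuclideanSpace 𝕜 ι where
  toLinearMap := (WithLp.linearEquiv 2 𝕜 (ι → 𝕜)).symm.toLinearMap ∘ₗ
    Function.ExtendByZero.linearMap 𝕜 f ∘ₗ (WithLp.linearEquiv 2 𝕜 (κ → 𝕜)).toLinearMap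
  norm_map' y := by
    simp only [EuclideanSpace.norm_eq]
    congr 1
    exact sum_extend_zero hf y.ofLp (g := fun _ a => ‖a‖ ^ 2) (by simp)

lemma mulVec_extend_zero {f : κ → ι} {R : Type*} [NonUnitalNonAssocSemiring R]
    (hf : f.Injective) (A : Matrix ι ι R) (y : κ → R) (i : κ) :
    (A *ᵥ Function.extend f y 0) (f i) = (A.submatrix f f *ᵥ y) i :=
  sum_extend_zero hf y (g := fun j a => A (f i) j * a) (by simp)

lemma inner_euclideanExtendByZero [DecidableEq ι] [DecidableEq κ] {f : κ → ι} (hf : f.Injective)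
    (A : Matrix ι ι 𝕜) (y : EuclideanSpace 𝕜 κ) :
    inner 𝕜 (euclideanExtendByZero 𝕜 hf y) (A.toEuclideanLin (euclideanExtendByZero 𝕜 hf y)) =
      inner 𝕜 y ((A.submatrix f f).toEuclideanLin y) := by
  rw [EuclideanSpace.inner_eq_star_dotProduct, EuclideanSpace.inner_eq_star_dotProduct]
  simp only [toLpLin_apply, dotProduct, Pi.star_apply]
  refine (sum_extend_zero hf y.ofLp (g := fun j a =>
    (A *ᵥ (euclideanExtendByZero 𝕜 hf y).ofLp) j * star a) (by simp)).trans ?_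
  exact sum_congr rfl fun i _ => congrArg (· * _) (mulVec_extend_zero hf A y.ofLp i)

variable [DecidableEq ι] [DecidableEq κ] {A : Matrix ι ι 𝕜} {f : κ → ι}

/-- The `k`-th largest eigenvalue, counted from `0`, of a Hermitian matrix, with value `0` for `k`
beyond the size of the matrix. -/
noncomputable def decreasingEigenvalue (hA : A.IsHermitian) (k : ℕ) : ℝ :=
  if h : k < Fintype.card ι then hA.eigenvalues₀ ⟨k, h⟩ else 0

lemma antitoneOn_decreasingEigenvalue (hA : A.IsHermitian) :
    AntitoneOn (decreasingEigenvalue hA) (Set.Iio (Fintype.card ι)) := by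
  intro i (hi : i < _) j (hj : j < _) hij
  simpa only [decreasingEigenvalue, hi, hj, dite_true] using hA.eigenvalues₀_antitone hij

lemma charpoly_eq_nodal_decreasingEigenvalue (hA : A.IsHermitian) :
    A.charpoly = nodal (range (Fintype.card ι))
      (fun k => (decreasingEigenvalue hA k : 𝕜)) := by
  rw [hA.charpoly_eq, nodal, prod_range,
    ← (Fintype.equivOfCardEq (Fintype.card_fin (Fintype.card ι))).prod_comp]
  simp [decreasingEigenvalue, IsHermitian.eigenvalues]

lemma decreasingEigenvalue_submatrix_le (hA : A.IsHermitian) (hf : f.Injective) {k : ℕ}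
    (hk : k < Fintype.card κ) :
    decreasingEigenvalue (hA.submatrix f) k ≤ decreasingEigenvalue hA k := by
  have hk' := hk.trans_le (Fintype.card_le_of_injective f hf)
  rw [decreasingEigenvalue, decreasingEigenvalue, dif_pos hk, dif_pos hk']
  exact eigenvalues_le_eigenvalues_of_re_inner_le (isSymmetric_toEuclideanLin_iff.mpr hA)
    finrank_euclideanSpace (isSymmetric_toEuclideanLin_iff.mpr (hA.submatrix f))
    finrank_euclideanSpace (euclideanExtendByZero 𝕜 hf)
    (fun y => (congrArg RCLike.re (inner_euclideanExtendByZero hf A y)).ge) hk hk'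

end Interlacing

section MicchelliWilloughby

variable {n : ℕ} {A : Matrix (Fin n) (Fin n) ℝ}

lemma charpoly_eq_nodal_range_decreasingEigenvalue (hA : A.IsHermitian) :
    A.charpoly = nodal (range n) (decreasingEigenvalue hA) := by
  simpa using charpoly_eq_nodal_decreasingEigenvalue hA

theorem adjugate_charmatrix_mem_newtonCone (hA : A.IsHermitian) (hA0 : ∀ x y, 0 ≤ A x y)
    (x r : Fin n) : A.charmatrix.adjugate x r ∈ newtonCone (decreasingEigenvalue hA) n := by
  induction n with
  | zero => exact x.elim0
  | succ n ih =>
    have hB := hA.submatrix r.succAbove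
    have hanti : AntitoneOn (decreasingEigenvalue hA) (Set.Iio n) :=
      (antitoneOn_decreasingEigenvalue hA).mono (Set.Iio_subset_Iio (by simp))
    have hle : ∀ k < n, decreasingEigenvalue hB k ≤ decreasingEigenvalue hA k := fun k hk =>
      decreasingEigenvalue_submatrix_le hA Fin.succAbove_right_injective (by simpa using hk)
    rcases Fin.eq_self_or_eq_succAbove r x with rfl | ⟨i, rfl⟩
    · rw [adjugate_charmatrix_apply_self, charpoly_eq_nodal_range_decreasingEigenvalue hB]
      exact nodal_range_mem_newtonCone_of_le hanti hle le_rfl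
    · rw [adjugate_charmatrix_apply_succAbove]
      refine sum_mem fun l _ => C_mul_mem_newtonCone ?_ (hA0 _ _)
      exact newtonCone_mono _ n.le_succ
        (newtonCone_le_newtonCone_of_le hanti hle (ih hB (fun _ _ => hA0 _ _) i l))

theorem aeval_nodal_Ico_decreasingEigenvalue_nonneg (hA : A.IsHermitian) (hA0 : ∀ x y, 0 ≤ A x y)
    (j : ℕ) (x y : Fin n) : 0 ≤ aeval A (nodal (Ico j n) (decreasingEigenvalue hA)) x y := by
  rcases j with - | j
  · rw [← range_eq_Ico, ← charpoly_eq_nodal_range_decreasingEigenvalue, aeval_self_charpoly,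
      Matrix.zero_apply]
  rcases lt_or_ge j n with hj | hj
  · have hmem := adjugate_charmatrix_mem_newtonCone hA hA0 x y
    rw [adjugate_charmatrix_eq_sum_nodal_smul (charpoly_eq_nodal_range_decreasingEigenvalue hA)]
      at hmem
    refine nonneg_of_sum_smul_nodal_mem_newtonCone (ν := decreasingEigenvalue hA) (n := n)
      (c := fun j => aeval A (nodal (Ico (j + 1) n) (decreasingEigenvalue hA)) x y) ?_ hj
    simpa only [Matrix.sum_apply, Matrix.smul_apply, map_apply, smul_eq_C_mul, smul_eq_mul,
      mul_comm] using hmem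
  · rw [Ico_eq_empty (by omega), nodal_empty, map_one]
    exact zero_le_one_elem x y

end MicchelliWilloughby

section NonnegNewtonProducts

variable {n : ℕ} {M : Matrix (Fin n) (Fin n) ℝ} {β : Fin n → ℝ}

/-- The conclusion of the Micchelli–Willoughby theorem: `M` has eigenvalues `β 0 ≤ β 1 ≤ ⋯`, with
multiplicity, and the products of `M - β i` over proper initial segments have nonnegative
entries. -/
structure HasNonnegNewtonProducts (M : Matrix (Fin n) (Fin n) ℝ) (β : Fin n → ℝ) : Prop where
  monotone : Monotone β
  charpoly_eq : M.charpoly = nodal univ β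
  nonneg : ∀ j x y, 0 ≤ aeval M (nodal (Iio j) β) x y

lemma nodal_univ_rev {R : Type*} [CommRing R] (ν : ℕ → R) :
    nodal univ (fun k : Fin n => ν k.rev) = nodal (range n) ν := by
  rw [nodal, nodal, prod_range]
  exact Fin.revPerm.prod_comp univ (fun k : Fin n => X - C (ν k)) (by simp)

lemma nodal_Iio_rev {R : Type*} [CommRing R] (ν : ℕ → R) (j : Fin n) :
    nodal (Iio j) (fun k : Fin n => ν k.rev) = nodal (Ico (n - j) n) ν := by
  refine prod_bij (fun k _ => k.rev) (fun k hk => ?_) (fun k _ l _ h => ?_) (fun i hi => ?_)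
    fun _ _ => rfl
  · have : k < j := by simpa using hk
    simp [Fin.val_rev]
    omega
  · exact Fin.rev_injective (Fin.ext h)
  · obtain ⟨h1, h2⟩ := mem_Ico.mp hi
    exact ⟨Fin.rev ⟨i, h2⟩, by simp [Fin.lt_def]; omega, by simp⟩

theorem hasNonnegNewtonProducts_of_isHermitian {A : Matrix (Fin n) (Fin n) ℝ}
    (hA : A.IsHermitian) (hA0 : ∀ x y, 0 ≤ A x y) :
    HasNonnegNewtonProducts A fun k => decreasingEigenvalue hA k.rev where
  monotone i j hij := antitoneOn_decreasingEigenvalue hA (by simp [-Fin.val_rev])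
    (by simp [-Fin.val_rev]) (Fin.rev_le_rev.mpr hij)
  charpoly_eq := by rw [nodal_univ_rev, ← charpoly_eq_nodal_range_decreasingEigenvalue]
  nonneg j x y := by
    rw [nodal_Iio_rev]
    exact aeval_nodal_Ico_decreasingEigenvalue_nonneg hA hA0 _ x y

lemma semiconjBy_aeval {R A : Type*} [CommSemiring R] [Semiring A] [Algebra R A] {a x y : A}
    (h : SemiconjBy a x y) (p : R[X]) : SemiconjBy a (aeval x p) (aeval y p) := by
  induction p using Polynomial.induction_on' with
  | add p q hp hq => simpa using hp.add_right hq
  | monomial k c =>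
    simp only [aeval_monomial]
    exact SemiconjBy.mul_right (Algebra.commutes c a).symm (h.pow_right k)

lemma charpoly_eq_of_semiconjBy {R ι : Type*} [CommRing R] [Fintype ι] [DecidableEq ι]
    {U A B : Matrix ι ι R} (hU : IsUnit U) (h : SemiconjBy U A B) : A.charpoly = B.charpoly := by
  obtain ⟨U, rfl⟩ := hU
  rw [← charpoly_units_conj U A, h.eq, ← coe_units_inv, Units.mul_inv_cancel_right]

lemma HasNonnegNewtonProducts.of_semiconjBy_diagonal {S : Matrix (Fin n) (Fin n) ℝ}
    (hS : HasNonnegNewtonProducts S β) {d : Fin n → ℝ} (hd : ∀ x, 0 < d x)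
    (h : SemiconjBy (diagonal d) M S) : HasNonnegNewtonProducts M β where
  monotone := hS.monotone
  charpoly_eq := by
    have hunit : IsUnit (diagonal d) :=
      isUnit_diagonal.mpr (Pi.isUnit_iff.mpr fun x => (hd x).ne'.isUnit)
    rw [charpoly_eq_of_semiconjBy hunit h, hS.charpoly_eq]
  nonneg j x y := by
    have hxy := congrFun₂ (semiconjBy_aeval h (nodal (Iio j) β)).eq x y
    rw [diagonal_mul, mul_diagonal] at hxy
    refine nonneg_of_mul_nonneg_right ?_ (hd x)
    rw [hxy]
    exact mul_nonneg (hS.nonneg j x y) (hd y).le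

/-- The matrix `√p x * M x y / √p y`, similar to `M`, which is symmetric when `M` is reversible with
respect to `p`. -/
noncomputable def symmetrization {ι : Type*} (p : ι → ℝ) (M : Matrix ι ι ℝ) : Matrix ι ι ℝ :=
  Matrix.of fun x y => √(p x) * M x y / √(p y)

lemma isHermitian_symmetrization {ι : Type*} {p : ι → ℝ} (hp : ∀ x, 0 < p x) {M : Matrix ι ι ℝ}
    (hrev : ∀ x y, p x * M x y = p y * M y x) : (symmetrization p M).IsHermitian := by
  refine IsHermitian.ext fun x y => ?_
  have hx : √(p x) ≠ 0 := (Real.sqrt_pos.mpr (hp x)).ne'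
  have hy : √(p y) ≠ 0 := (Real.sqrt_pos.mpr (hp y)).ne'
  simp only [symmetrization, of_apply, star_trivial]
  rw [div_eq_div_iff hx hy]
  linear_combination hrev y x + M y x * Real.mul_self_sqrt (hp y).le -
    M x y * Real.mul_self_sqrt (hp x).le

lemma semiconjBy_diagonal_symmetrization {ι : Type*} [Fintype ι] [DecidableEq ι] {p : ι → ℝ}
    (hp : ∀ x, 0 < p x) (M : Matrix ι ι ℝ) :
    SemiconjBy (diagonal fun x => √(p x)) M (symmetrization p M) := by
  ext x y
  rw [diagonal_mul, mul_diagonal, symmetrization, of_apply,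
    div_mul_cancel₀ _ (Real.sqrt_pos.mpr (hp y)).ne']

theorem exists_hasNonnegNewtonProducts_of_reversible {p : Fin n → ℝ} (hp : ∀ x, 0 < p x)
    (hM : ∀ x y, 0 ≤ M x y) (hrev : ∀ x y, p x * M x y = p y * M y x) :
    ∃ β, HasNonnegNewtonProducts M β := by
  have hnonneg (x y) : 0 ≤ symmetrization p M x y :=
    div_nonneg (mul_nonneg (Real.sqrt_nonneg _) (hM x y)) (Real.sqrt_nonneg _)
  have hsymm := hasNonnegNewtonProducts_of_isHermitian (isHermitian_symmetrization hp hrev) hnonneg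
  exact ⟨_, hsymm.of_semiconjBy_diagonal
    (fun x => Real.sqrt_pos.mpr (hp x)) (semiconjBy_diagonal_symmetrization hp M)⟩

lemma abs_le_one_of_isRoot_charpoly {ι : Type*} [Fintype ι] [DecidableEq ι] {M : Matrix ι ι ℝ}
    (hM : M ∈ rowStochastic ℝ ι) {a : ℝ} (ha : M.charpoly.IsRoot a) : |a| ≤ 1 := by
  rw [← charpoly_toLin', ← Module.End.hasEigenvalue_iff_isRoot_charpoly] at ha
  obtain ⟨k, hk⟩ := eigenvalue_mem_ball ha
  rw [Metric.mem_closedBall, Real.dist_eq] at hk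
  calc
    |a| ≤ |a - M k k| + |M k k| := by simpa using abs_add_le (a - M k k) (M k k)
    _ ≤ ∑ j ∈ univ.erase k, ‖M k j‖ + ‖M k k‖ := by gcongr; rfl
    _ = ∑ j, ‖M k j‖ := sum_erase_add _ _ (mem_univ k)
    _ = ∑ j, M k j := sum_congr rfl fun j _ => Real.norm_of_nonneg (hM.1 k j)
    _ = 1 := sum_row_of_mem_rowStochastic hM k

lemma HasNonnegNewtonProducts.mem_Icc (h : HasNonnegNewtonProducts M β)
    (hM : M ∈ rowStochastic ℝ (Fin n)) : β ∈ Set.Icc (-1) 1 := by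
  have habs (k) : |β k| ≤ 1 := abs_le_one_of_isRoot_charpoly hM (by
    rw [h.charpoly_eq, IsRoot, eval_nodal_at_node (mem_univ k)])
  exact ⟨fun k => (abs_le.mp (habs k)).1, fun k => (abs_le.mp (habs k)).2⟩

lemma continuous_aeval_nodal {R ι κ : Type*} [CommRing R] [TopologicalSpace R]
    [IsTopologicalRing R] [Fintype ι] [DecidableEq ι] (s : Finset κ) :
    Continuous fun z : Matrix ι ι R × (κ → R) => aeval z.1 (nodal s z.2) := by
  classical
  induction s using Finset.induction_on with
  | empty => simpa using continuous_const
  | insert a s ha ih =>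
    simp only [nodal_insert_eq_nodal ha, map_mul, map_sub, aeval_X, aeval_C, algebraMap_eq_diagonal]
    exact (continuous_fst.sub (Continuous.matrix_diagonal (by fun_prop))).mul ih

lemma charpoly_eq_nodal_iff {R ι κ : Type*} [CommRing R] [IsDomain R] [Infinite R] [Fintype ι]
    [DecidableEq ι] {M : Matrix ι ι R} {s : Finset κ} {β : κ → R} :
    M.charpoly = nodal s β ↔ ∀ t, (scalar ι t - M).det = ∏ k ∈ s, (t - β k) := by
  simp only [← eval_charpoly, ← eval_nodal]
  exact ⟨fun h t => by rw [h], Polynomial.funext⟩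

lemma isClosed_setOf_hasNonnegNewtonProducts (n : ℕ) :
    IsClosed {z : Matrix (Fin n) (Fin n) ℝ × (Fin n → ℝ) | HasNonnegNewtonProducts z.1 z.2} := by
  have hset : {z : Matrix (Fin n) (Fin n) ℝ × (Fin n → ℝ) | HasNonnegNewtonProducts z.1 z.2} =
      {z | Monotone z.2} ∩ {z | ∀ t, (scalar (Fin n) t - z.1).det = ∏ k, (t - z.2 k)} ∩
        {z : Matrix (Fin n) (Fin n) ℝ × (Fin n → ℝ) |
          ∀ j x y, 0 ≤ aeval z.1 (nodal (Iio j) z.2) x y} := by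
    ext z
    simp only [Set.mem_inter_iff, Set.mem_ofPred_eq, ← charpoly_eq_nodal_iff]
    exact ⟨fun h => ⟨⟨h.monotone, h.charpoly_eq⟩, h.nonneg⟩, fun h => ⟨h.1.1, h.1.2, h.2⟩⟩
  have hdet (t : ℝ) : Continuous fun z : Matrix (Fin n) (Fin n) ℝ × (Fin n → ℝ) =>
      (scalar (Fin n) t - z.1).det :=
    Continuous.matrix_det (continuous_const.sub continuous_fst)
  simp only [hset, Set.ofPred_forall]
  refine ((isClosed_monotone.preimage continuous_snd).inter ?_).inter ?_
  · exact isClosed_iInter fun t => isClosed_eq (hdet t) (by fun_prop)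
  · exact isClosed_iInter fun j => isClosed_iInter fun x => isClosed_iInter fun y =>
      isClosed_le continuous_const ((continuous_aeval_nodal _).matrix_elem x y)

theorem exists_hasNonnegNewtonProducts_of_mem_revClosure (hM : M ∈ RevClosure n) :
    ∃ β, HasNonnegNewtonProducts M β := by
  let K : Set (Fin n → ℝ) := Set.Icc (-1) 1
  have : CompactSpace K := isCompact_iff_compactSpace.mp isCompact_Icc
  let T : Set (Matrix (Fin n) (Fin n) ℝ × K) := {z | HasNonnegNewtonProducts z.1 z.2}
  have hT : IsClosed T := (isClosed_setOf_hasNonnegNewtonProducts n).preimage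
    (continuous_id.prodMap continuous_subtype_val)
  have hsub : RevClosure n ⊆ Prod.fst '' T := by
    refine closure_minimal ?_ (isClosedMap_fst_of_compactSpace _ hT)
    rintro M ⟨hM0, hM1, p, hp, -, hrev⟩
    obtain ⟨β, hβ⟩ := exists_hasNonnegNewtonProducts_of_reversible hp hM0 hrev
    exact ⟨⟨M, β, hβ.mem_Icc (mem_rowStochastic_iff_sum.mpr ⟨hM0, hM1⟩)⟩, hβ, rfl⟩
  obtain ⟨⟨_, β⟩, hβ, rfl⟩ := hsub hM
  exact ⟨β, hβ⟩

lemma sum_row_eq_one_of_mem_revClosure (hM : M ∈ RevClosure n) (x : Fin n) : ∑ y, M x y = 1 := by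
  refine closure_minimal (t := {M : Matrix (Fin n) (Fin n) ℝ | ∑ y, M x y = 1})
    (fun M h => h.2.1 x) (isClosed_eq ?_ continuous_const) hM
  exact continuous_finsetSum _ fun y _ => continuous_id.matrix_elem x y

lemma roots_nodal {R ι : Type*} [CommRing R] [IsDomain R] (s : Finset ι) (v : ι → R) :
    (nodal s v).roots = s.val.map v := by
  rw [← roots_multiset_prod_X_sub_C (s.val.map v), Multiset.map_map]
  rfl

lemma eq_of_monotone_of_nodal_univ_eq {R : Type*} [CommRing R] [IsDomain R] [PartialOrder R]
    {β γ : Fin n → R} (hβ : Monotone β) (hγ : Monotone γ) (h : nodal univ β = nodal univ γ) :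
    β = γ := by
  have hperm := congrArg roots h
  rw [roots_nodal, roots_nodal, Fin.univ_val_map, Fin.univ_val_map, Multiset.coe_eq_coe] at hperm
  exact List.ofFn_injective (hperm.eq_of_sortedLE hβ.sortedLE_ofFn hγ.sortedLE_ofFn)

end NonnegNewtonProducts

section LocalEquilibria

lemma eq_of_vecMul_eq_smul_of_sum_eq_one {K ι : Type*} [Field K] [Fintype ι] [DecidableEq ι]
    {M : Matrix ι ι K} {a : K} (hM : M.charpoly.rootMultiplicity a ≤ 1) {v w : ι → K}
    (hv : v ᵥ* M = a • v) (hw : w ᵥ* M = a • w) (hv1 : ∑ x, v x = 1) (hw1 : ∑ x, w x = 1) :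
    v = w := by
  have hfin := LinearMap.finrank_eigenspace_le (toLin' Mᵀ) a
  rw [charpoly_toLin', charpoly_transpose] at hfin
  obtain ⟨u, hu⟩ := finrank_le_one_iff.mp (hfin.trans hM)
  have exists_smul_eq {z : ι → K} (hz : z ᵥ* M = a • z) : ∃ c : K, c • (u : ι → K) = z := by
    have hmem : z ∈ Module.End.eigenspace (toLin' Mᵀ) a := by
      rw [Module.End.mem_eigenspace_iff, toLin'_apply, mulVec_transpose, hz]
    obtain ⟨c, hc⟩ := hu ⟨z, hmem⟩
    exact ⟨c, congrArg Subtype.val hc⟩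
  obtain ⟨b, rfl⟩ := exists_smul_eq hv
  obtain ⟨c, rfl⟩ := exists_smul_eq hw
  simp only [Pi.smul_apply, smul_eq_mul, ← Finset.mul_sum] at hv1 hw1
  rw [mul_right_cancel₀ (right_ne_zero_of_mul_eq_one hv1) (hv1.trans hw1.symm)]

lemma rootMultiplicity_nodal_eq_one {R ι : Type*} [CommRing R] [IsDomain R] {s : Finset ι}
    {v : ι → R} {i : ι} (hi : i ∈ s) (h : ∀ k ∈ s, v i = v k → k = i) :
    (nodal s v).rootMultiplicity (v i) = 1 := by
  classical
  rw [← count_roots, roots_nodal, Multiset.count_map, ← filter_val, card_val, card_eq_one]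
  refine ⟨i, ext fun k => ?_⟩
  rw [mem_filter, mem_singleton]
  exact ⟨fun hk => h k hk.1 hk.2, by rintro rfl; exact ⟨hi, rfl⟩⟩

variable {R ι : Type*} [Fintype ι] {N : ℕ}

/-- The recursion `μ_j P = β_j μ_j + (1 - β_j) μ_{j+1}` defining the local equilibria; terms of
the sequence `μ` beyond index `N - 1` are unconstrained. -/
def IsLocalEquilibriumSequence [Ring R] (P : Matrix ι ι R) (β : Fin N → R) (μ : ℕ → ι → R) :
    Prop :=
  ∀ j : Fin N, (j : ℕ) < N - 1 → μ j ᵥ* P = β j • μ j + (1 - β j) • μ (j + 1)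

namespace IsLocalEquilibriumSequence

section

variable [CommRing R] {P : Matrix ι ι R} {β : Fin N → R} {μ : ℕ → ι → R}

lemma sum_eq_sum_zero [IsDomain R] (h : IsLocalEquilibriumSequence P β μ)
    (hP : ∀ x, ∑ y, P x y = 1) (hβ : ∀ j : Fin N, (j : ℕ) < N - 1 → β j ≠ 1) {j : ℕ}
    (hj : j ≤ N - 1) : ∑ x, μ j x = ∑ x, μ 0 x := by
  induction j with
  | zero => rfl
  | succ j ih =>
    have hP1 : P *ᵥ 1 = 1 := by
      ext x
      simpa [mulVec, dotProduct] using hP x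
    have hstep := congrArg (· ⬝ᵥ 1) (h ⟨j, by omega⟩ (by simp; omega))
    beta_reduce at hstep
    rw [← dotProduct_mulVec, hP1, add_dotProduct, smul_dotProduct, smul_dotProduct] at hstep
    simp only [dotProduct_one, smul_eq_mul] at hstep
    rw [← ih (by omega)]
    refine mul_left_cancel₀ (sub_ne_zero.mpr (hβ ⟨j, by omega⟩ (by simp; omega)).symm) ?_
    linear_combination -hstep

variable [DecidableEq ι]

lemma vecMul_aeval_nodal_Iio (h : IsLocalEquilibriumSequence P β μ) (j : Fin N) :
    μ 0 ᵥ* aeval P (nodal (Iio j) β) = (nodal (Iio j) β).eval 1 • μ j := by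
  obtain ⟨j, hj⟩ := j
  induction j with
  | zero =>
    have hIio : Iio (⟨0, hj⟩ : Fin N) = ∅ := by ext i; simp [Fin.lt_def]
    simp [hIio]
  | succ j ih =>
    have hIio : Iio (⟨j + 1, hj⟩ : Fin N) = insert ⟨j, by omega⟩ (Iio ⟨j, by omega⟩) := by
      ext i
      simp only [mem_insert, mem_Iio, Fin.lt_def, Fin.ext_iff]
      omega
    have hstep : μ j ᵥ* aeval P (X - C (β ⟨j, by omega⟩)) =
        (1 - β ⟨j, by omega⟩) • μ (j + 1) := by
      rw [map_sub, aeval_X, aeval_C, Algebra.algebraMap_eq_smul_one, vecMul_sub, vecMul_smul,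
        vecMul_one, sub_eq_iff_eq_add']
      exact h ⟨j, by omega⟩ (by simp; omega)
    rw [hIio, nodal_insert_eq_nodal (by simp), mul_comm, map_mul, ← vecMul_vecMul,
      ih (by omega), smul_vecMul, hstep, smul_smul, eval_mul]
    simp

lemma vecMul_eq_smul_of_isTop [IsDomain R] (h : IsLocalEquilibriumSequence P β μ)
    (hchar : P.charpoly = nodal univ β) {j : Fin N} (hj : IsTop j)
    (hβ : ∀ i < j, β i ≠ 1) : μ j ᵥ* P = β j • μ j := by
  have hne : (nodal (Iio j) β).eval 1 ≠ 0 :=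
    eval_nodal_not_at_node fun i hi => (hβ i (mem_Iio.mp hi)).symm
  have huniv : univ = insert j (Iio j) := by rw [Iio_insert, eq_comm, eq_univ_iff_forall]; simpa
  have hCH := aeval_self_charpoly P
  rw [hchar, huniv, nodal_insert_eq_nodal (by simp), mul_comm, map_mul] at hCH
  have hzero := congrArg (μ 0 ᵥ* ·) hCH
  simp only [← vecMul_vecMul, h.vecMul_aeval_nodal_Iio, smul_vecMul, vecMul_zero] at hzero
  have hker := (smul_eq_zero_iff_right hne).mp hzero
  rwa [map_sub, aeval_X, aeval_C, Algebra.algebraMap_eq_smul_one, vecMul_sub, vecMul_smul,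
    vecMul_one, sub_eq_zero] at hker

end

lemma eq_of_vecMul_eq_self {K : Type*} [Field K] [DecidableEq ι] {P : Matrix ι ι K} {β : Fin N → K}
    {μ : ℕ → ι → K} (h : IsLocalEquilibriumSequence P β μ) (hchar : P.charpoly = nodal univ β)
    {j : Fin N} (hj : IsTop j) (hβ : ∀ i < j, β i ≠ 1) (hβj : β j = 1) {w : ι → K}
    (hw : w ᵥ* P = w) (hμ1 : ∑ x, μ j x = 1) (hw1 : ∑ x, w x = 1) : μ j = w := by
  have hsimple : P.charpoly.rootMultiplicity (β j) = 1 := by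
    rw [hchar]
    refine rootMultiplicity_nodal_eq_one (mem_univ j) fun k _ hk => ?_
    by_contra hne
    exact hβ k (lt_of_le_of_ne (hj k) hne) (hk.symm.trans hβj)
  exact eq_of_vecMul_eq_smul_of_sum_eq_one hsimple.le (h.vecMul_eq_smul_of_isTop hchar hj hβ)
    (by rw [hw, hβj, one_smul]) hμ1 hw1

lemma nonneg [CommRing R] [LinearOrder R] [IsStrictOrderedRing R] [DecidableEq ι]
    {P : Matrix ι ι R} {β : Fin N → R} {μ : ℕ → ι → R} (h : IsLocalEquilibriumSequence P β μ)
    (hμ : ∀ x, 0 ≤ μ 0 x) {j : Fin N} (hP : ∀ x y, 0 ≤ aeval P (nodal (Iio j) β) x y)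
    (hβ : ∀ i < j, β i < 1) (x : ι) : 0 ≤ μ j x := by
  have hpos : 0 < (nodal (Iio j) β).eval 1 := by
    rw [eval_nodal]
    exact prod_pos fun i hi => sub_pos.mpr (hβ i (mem_Iio.mp hi))
  refine nonneg_of_mul_nonneg_right ?_ hpos
  rw [← smul_eq_mul, ← Pi.smul_apply, ← h.vecMul_aeval_nodal_Iio]
  exact sum_nonneg fun y _ => mul_nonneg (hμ y) (hP y x)

end IsLocalEquilibriumSequence

theorem local_equilibria_general (N : ℕ) (P : Matrix (Fin N) (Fin N) ℝ) (hPcl : P ∈ RevClosure N)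
    (piv : Fin N → ℝ) (hpiv1 : ∑ i, piv i = 1) (hstat : ∀ j, ∑ i, piv i * P i j = piv j)
    (β : Fin N → ℝ) (hchar : P.charpoly = ∏ j, (X - C (β j))) (hmono : Monotone β)
    (hβlt : ∀ j : Fin N, (j : ℕ) < N - 1 → β j < 1)
    (hβlast : ∀ j : Fin N, (j : ℕ) = N - 1 → β j = 1)
    (μ : Fin N → ℝ) (hμ0 : ∀ x, 0 ≤ μ x) (hμ1 : ∑ x, μ x = 1)
    (μseq : ℕ → Fin N → ℝ) (hμinit : μseq 0 = μ)
    (hrec : ∀ j, ∀ h : j < N - 1, ∀ y,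
      ∑ x, μseq j x * P x y
        = β ⟨j, by omega⟩ * μseq j y + (1 - β ⟨j, by omega⟩) * μseq (j + 1) y) :
    (∀ j ≤ N - 1, ∑ x, μseq j x = 1) ∧
    μseq (N - 1) = piv ∧
    (∀ j ≤ N - 1, ∀ x, 0 ≤ μseq j x) := by
  subst hμinit
  obtain ⟨γ, hγ⟩ := exists_hasNonnegNewtonProducts_of_mem_revClosure hPcl
  obtain rfl : β = γ :=
    eq_of_monotone_of_nodal_univ_eq hmono hγ.monotone (hchar.symm.trans hγ.charpoly_eq)
  have hseq : IsLocalEquilibriumSequence P β μseq := fun j hj => funext (hrec j hj)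
  have hmass (j : ℕ) (hj : j ≤ N - 1) : ∑ x, μseq j x = 1 :=
    (hseq.sum_eq_sum_zero (sum_row_eq_one_of_mem_revClosure hPcl)
      (fun j hj => (hβlt j hj).ne) hj).trans hμ1
  have hN : 0 < N := Nat.pos_of_ne_zero (by rintro rfl; simp at hpiv1)
  have hpiv : μseq (N - 1) = piv :=
    hseq.eq_of_vecMul_eq_self (j := ⟨N - 1, by omega⟩) hchar (fun i => Nat.le_pred_of_lt i.2)
      (fun i hi => (hβlt i hi).ne) (hβlast _ rfl) (funext hstat) (hmass _ le_rfl) hpiv1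
  exact ⟨hmass, hpiv, fun j hj => hseq.nonneg (j := ⟨j, by omega⟩) hμ0 (hγ.nonneg _)
    fun i hi => hβlt i (lt_of_lt_of_le hi hj)⟩

end LocalEquilibria

end

/-- Proposition 3.1 of the paper (local equilibria): for reversible `P` with
nonnegative eigenvalues `0 ≤ β_1 ≤ ⋯ ≤ β_{N-1} < β_N = 1` and any initial probability
distribution `μ`, the measures `μ_j` defined by `μ_1 = μ` and
`μ_j P = β_j μ_j + (1-β_j) μ_{j+1}` all have total mass `1`, satisfy `μ_N = π`, and
have nonnegative entries.  (Indices are shifted down by one: `μseq j` is the paper's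
`μ_{j+1}` and `β ⟨j⟩` is the paper's `β_{j+1}`.) -/
theorem local_equilibria (N : ℕ) (hN : 2 ≤ N)
    (P : Matrix (Fin N) (Fin N) ℝ) (hPcl : P ∈ RevClosure N)
    (piv : Fin N → ℝ) (hpiv0 : ∀ i, 0 ≤ piv i) (hpiv1 : ∑ i, piv i = 1)
    (hstat : ∀ j, ∑ i, piv i * P i j = piv j)
    (hrev : ∀ i j, piv i * P i j = piv j * P j i)
    (β : Fin N → ℝ)
    (hchar : P.charpoly = ∏ j, (Polynomial.X - Polynomial.C (β j)))
    (hmono : Monotone β) (hβ0 : ∀ j, 0 ≤ β j)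
    (hβlt : ∀ j : Fin N, (j : ℕ) < N - 1 → β j < 1)
    (hβlast : ∀ j : Fin N, (j : ℕ) = N - 1 → β j = 1)
    (μ : Fin N → ℝ) (hμ0 : ∀ x, 0 ≤ μ x) (hμ1 : ∑ x, μ x = 1)
    (μseq : ℕ → Fin N → ℝ) (hμinit : μseq 0 = μ)
    (hrec : ∀ j, ∀ h : j < N - 1, ∀ y,
      ∑ x, μseq j x * P x y
        = β ⟨j, by omega⟩ * μseq j y + (1 - β ⟨j, by omega⟩) * μseq (j + 1) y) :
    (∀ j ≤ N - 1, ∑ x, μseq j x = 1) ∧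
    μseq (N - 1) = piv ∧
    (∀ j ≤ N - 1, ∀ x, 0 ≤ μseq j x) :=
  local_equilibria_general N P hPcl piv hpiv1 hstat β hchar hmono hβlt hβlast μ hμ0 hμ1 μseq hμinit
    hrec
end

section
/- Let P be a reversible Markov matrix (in the closure of reversible matrices with positive stationary distribution) on a state space of size N with eigenvalues 0 ≤ β_1 ≤ ··· ≤ β_{N-1} < β_N = 1 and stationary distribution π. Let τ_1,...,τ_{N-1} be independent geometric random variables with P(τ_j = t) = β_j^{t-1}(1-β_j). Then for any initial probability distribution μ and any t ≥ 0, the separation distance satisfies d_sep(μP^t, π) ≤ P(τ_1 + ··· + τ_{N-1} > t). -/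
namespace MicchelliWilloughby

open Finset Lagrange Matrix Polynomial
open scoped NNReal InnerProductSpace

section Adjugate

variable {R : Type*} [CommRing R]

lemma adjugate_apply_self {n : ℕ} (M : Matrix (Fin (n + 1)) (Fin (n + 1)) R) (i : Fin (n + 1)) :
    M.adjugate i i = (M.submatrix i.succAbove i.succAbove).det := by
  rw [adjugate_fin_succ_eq_det_submatrix, Even.neg_one_pow ⟨_, rfl⟩, one_mul]

lemma sum_mul_adjugate_apply {ι : Type*} [Fintype ι] [DecidableEq ι] (M : Matrix ι ι R)
    (r : ι → R) (j : ι) : ∑ k, r k * M.adjugate k j = (M.updateRow j r).det := by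
  rw [← cramer_transpose_apply, cramer_eq_adjugate_mulVec, ← adjugate_transpose,
    mulVec_transpose]
  simp [vecMul, dotProduct]

lemma adjugate_apply_succAbove {n : ℕ} (M : Matrix (Fin (n + 1)) (Fin (n + 1)) R)
    (i : Fin (n + 1)) (j : Fin n) :
    M.adjugate i (i.succAbove j) =
      -∑ k, M i (i.succAbove k) * (M.submatrix i.succAbove i.succAbove).adjugate k j := by
  set N := M.updateRow (i.succAbove j) (M i) with hN
  have hswap : M.updateRow (i.succAbove j) (Pi.single i 1) =
      (N.updateRow i (Pi.single i 1)).submatrix (Equiv.swap i (i.succAbove j)) id := by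
    have hne := Fin.succAbove_ne i j
    ext a b
    rcases eq_or_ne a i with rfl | hai
    · simp [hN, hne, hne.symm]
    rcases eq_or_ne a (i.succAbove j) with rfl | haj
    · simp
    · simp [hN, hai, haj, Equiv.swap_apply_of_ne_of_ne hai haj]
  have hsub : N.submatrix i.succAbove i.succAbove =
      (M.submatrix i.succAbove i.succAbove).updateRow j fun k => M i (i.succAbove k) := by
    ext a b
    simp [hN, updateRow_apply]
  rw [sum_mul_adjugate_apply, ← hsub, ← adjugate_apply_self, adjugate_apply, adjugate_apply, hswap,
    det_permute, Equiv.Perm.sign_swap (Fin.succAbove_ne i j).symm]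
  simp

lemma charmatrix_submatrix {ι κ : Type*} [Fintype ι] [DecidableEq ι] [Fintype κ] [DecidableEq κ]
    (M : Matrix ι ι R) {f : κ → ι} (hf : f.Injective) :
    M.charmatrix.submatrix f f = (M.submatrix f f).charmatrix := by
  ext1 a b
  simp [charmatrix_apply, diagonal_apply, hf.eq_iff]

lemma C_eval_nodal_sub_nodal {κ : Type*} [Fintype κ] [LinearOrder κ] [LocallyFiniteOrderTop κ]
    [LocallyFiniteOrderBot κ] (l : κ → R) (x : R) :
    C ((nodal univ l).eval x) - nodal univ l =
      (C x - X) * ∑ k, (nodal (Iio k) l).eval x • nodal (Ioi k) l := by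
  have h := prod_add_ordered univ (fun i => X - C (l i)) fun _ => C x - X
  simp only [filter_gt_eq_Iio, filter_lt_eq_Ioi, add_comm (X - _), sub_add_sub_cancel] at h
  simp only [nodal_eq, eval_prod, eval_sub, eval_X, eval_C, map_prod, C_sub, h, mul_sum, mul_assoc,
    smul_eq_C_mul, add_sub_cancel_left]

lemma adjugate_charmatrix_eq_sum {ι κ : Type*} [Fintype ι] [DecidableEq ι] [Fintype κ]
    [LinearOrder κ] [LocallyFiniteOrderTop κ] [LocallyFiniteOrderBot κ]
    {A : Matrix ι ι R} {l : κ → R} (hl : A.charpoly = nodal univ l) :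
    A.charmatrix.adjugate = ∑ k, nodal (Iio k) l • (aeval A (nodal (Ioi k) l)).map C := by
  have heval (s : Finset κ) : (nodal s fun k => C (l k)).eval X = nodal s l := by
    simp [nodal_eq, eval_prod]
  have haeval (s : Finset κ) :
      aeval (A.map C) (nodal s fun k => C (l k)) = (aeval A (nodal s l)).map C := by
    have hmap : (nodal s fun k => C (l k)) = (nodal s l).map (algebraMap R R[X]) := by
      simp [nodal_eq, Polynomial.map_prod]
    rw [hmap, aeval_map_algebraMap]
    exact aeval_algHom_apply CAlgHom.mapMatrix A (nodal s l)
  have hmul : A.charmatrix * ∑ k, nodal (Iio k) l • (aeval A (nodal (Ioi k) l)).map C =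
      A.charpoly • 1 := by
    have h := congrArg (aeval (A.map C)) (C_eval_nodal_sub_nodal (fun k => C (l k)) X)
    simp only [heval, map_sub, map_mul, map_sum, map_smul, aeval_C, aeval_X, haeval, ← hl,
      aeval_self_charpoly] at h
    rw [Matrix.map_zero _ C_0, sub_zero, Algebra.algebraMap_eq_smul_one] at h
    exact h.symm
  have hadj := congrArg (A.charmatrix.adjugate * ·) hmul
  simp only [← mul_assoc, adjugate_mul, mul_smul_comm, mul_one, smul_mul_assoc, one_mul] at hadj
  exact (charpoly_monic A).isRegular.left.isSMulRegular.matrix hadj.symm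

end Adjugate

section NewtonCone

/-- The cone of nonnegative real combinations of the Newton basis polynomials
`∏ j < k, (X - l j)` for `k < n`, encoded as a submodule over the semiring `ℝ≥0`. The entries of
the adjugate of `X - A` are shown to lie in it. -/
noncomputable def newtonCone {n : ℕ} (l : Fin n → ℝ) : Submodule ℝ≥0 ℝ[X] :=
  Submodule.span ℝ≥0 (Set.range fun k => nodal (Iio k) l)

lemma linearIndependent_nodal_Iio {R : Type*} [CommRing R] [IsDomain R] {n : ℕ} (l : Fin n → R) :
    LinearIndependent R fun k => nodal (Iio k) l := by
  let S : Polynomial.Sequence R :=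
    { elems' := fun k => if h : k < n then nodal (Iio ⟨k, h⟩) l else X ^ k
      degree_eq' := fun k => by
        split_ifs <;> simp [degree_nodal] }
  have hS : (fun k => nodal (Iio k) l) = S ∘ Fin.val :=
    funext fun k => (dif_pos k.2 : S k = nodal (Iio k) l).symm
  exact hS ▸ S.linearIndependent.comp _ Fin.val_injective

lemma nonneg_of_sum_smul_mem_newtonCone {n : ℕ} {l : Fin n → ℝ} {a : Fin n → ℝ}
    (h : ∑ k, a k • nodal (Iio k) l ∈ newtonCone l) (k : Fin n) : 0 ≤ a k := by
  obtain ⟨c, hc⟩ := (Submodule.mem_span_range_iff_exists_fun _).mp h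
  have hca : ∑ k, ((c k : ℝ) - a k) • nodal (Iio k) l = 0 := by
    rw [← sub_eq_zero.mpr hc, ← sum_sub_distrib]
    simp only [sub_smul, NNReal.smul_def]
  rw [← sub_eq_zero.mp (Fintype.linearIndependent_iff.mp (linearIndependent_nodal_Iio l) _ hca k)]
  exact (c k).2

lemma X_mul_nodal_Iio {R κ : Type*} [CommRing R] [LinearOrder κ] [LocallyFiniteOrderBot κ]
    (l : κ → R) (k : κ) :
    X * nodal (Iio k) l = nodal (Iic k) l + l k • nodal (Iio k) l := by
  rw [← Iio_insert, nodal_insert_eq_nodal notMem_Iio_self, smul_eq_C_mul]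
  ring

lemma Iio_succ_eq_Iic_castSucc {n : ℕ} (k : Fin n) : Iio k.succ = Iic k.castSucc := by
  ext
  rw [mem_Iio, mem_Iic, Fin.le_castSucc_iff]

variable {n : ℕ} {l : Fin (n + 1) → ℝ} {m : Fin n → ℝ}

lemma nodal_mem_newtonCone (h : ∀ i j, i ≤ j → m j ≤ l i.castSucc) (k : Fin (n + 1)) :
    nodal {i | i.castSucc < k} m ∈ newtonCone l := by
  suffices hk : nodal {i | i.castSucc < k} m ∈
      Submodule.span ℝ≥0 ((fun j => nodal (Iio j) l) '' Set.Iic k) from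
    Submodule.span_mono (Set.image_subset_range ..) hk
  induction k using Fin.induction with
  | zero =>
    refine Submodule.subset_span ⟨0, Set.self_mem_Iic, ?_⟩
    simp [nodal_eq, ← bot_eq_zero]
  | succ k ih =>
    have hstep : (nodal {i | i.castSucc < k.succ} m : ℝ[X]) =
        (X - C (m k)) * nodal {i | i.castSucc < k.castSucc} m := by
      rw [← nodal_insert_eq_nodal (by simp)]
      congr 1
      ext i
      simp [le_iff_eq_or_lt]
    rw [hstep]
    suffices Submodule.span ℝ≥0 ((fun j => nodal (Iio j) l) '' Set.Iic k.castSucc) ≤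
        (Submodule.span ℝ≥0 ((fun j => nodal (Iio j) l) '' Set.Iic k.succ)).comap
          (LinearMap.mulLeft ℝ≥0 (X - C (m k))) from this ih
    refine Submodule.span_le.mpr ?_
    rintro _ ⟨i, hik, rfl⟩
    obtain ⟨i, rfl⟩ := Fin.exists_castSucc_eq.mpr (hik.trans_lt k.castSucc_lt_last).ne
    have hi : i ≤ k := hik
    have hsplit : (X - C (m k)) * nodal (Iio i.castSucc) l =
        nodal (Iio i.succ) l + (l i.castSucc - m k).toNNReal • nodal (Iio i.castSucc) l := by
      rw [sub_mul, X_mul_nodal_Iio, ← Iio_succ_eq_Iic_castSucc, NNReal.smul_def,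
        Real.coe_toNNReal _ (sub_nonneg.mpr (h i k hi)), sub_smul, ← smul_eq_C_mul]
      abel
    rw [SetLike.mem_coe, Submodule.mem_comap, LinearMap.mulLeft_apply, hsplit]
    refine add_mem ?_ (Submodule.smul_mem _ _ ?_)
    · exact Submodule.subset_span ⟨i.succ, Fin.succ_le_succ_iff.mpr hi, rfl⟩
    · exact Submodule.subset_span ⟨i.castSucc, hik.trans k.castSucc_lt_succ.le, rfl⟩

lemma newtonCone_le (h : ∀ i j, i ≤ j → m j ≤ l i.castSucc) : newtonCone m ≤ newtonCone l := by
  refine Submodule.span_le.mpr ?_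
  rintro _ ⟨k, rfl⟩
  have : Iio k = ({i | i.castSucc < k.castSucc} : Finset (Fin n)) := by
    ext
    simp
  simpa [this] using nodal_mem_newtonCone h k.castSucc

lemma nodal_univ_mem_newtonCone (h : ∀ i j, i ≤ j → m j ≤ l i.castSucc) :
    nodal univ m ∈ newtonCone l := by
  simpa [Fin.castSucc_lt_last] using nodal_mem_newtonCone h (Fin.last n)

end NewtonCone

section CourantFischer

variable {𝕜 E F : Type*} [RCLike 𝕜] [NormedAddCommGroup E] [InnerProductSpace 𝕜 E]
  [FiniteDimensional 𝕜 E] [NormedAddCommGroup F] [InnerProductSpace 𝕜 F] [FiniteDimensional 𝕜 F]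
  {T : E →ₗ[𝕜] E} {S : F →ₗ[𝕜] F} {n m : ℕ}

lemma re_inner_apply_self_eq_sum (hT : T.IsSymmetric) (hn : Module.finrank 𝕜 E = n) (x : E) :
    RCLike.re ⟪x, T x⟫_𝕜 = ∑ i, hT.eigenvalues hn i * ‖⟪hT.eigenvectorBasis hn i, x⟫_𝕜‖ ^ 2 := by
  rw [← (hT.eigenvectorBasis hn).sum_inner_mul_inner, map_sum]
  refine sum_congr rfl fun i _ => ?_
  have h := hT.eigenvectorBasis_apply_self_apply hn x i
  rw [OrthonormalBasis.repr_apply_apply, OrthonormalBasis.repr_apply_apply] at h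
  rw [h, mul_left_comm, RCLike.re_ofReal_mul, inner_mul_symm_re_eq_norm, norm_mul, norm_inner_symm,
    sq]

lemma re_inner_apply_self_le (hT : T.IsSymmetric) (hn : Module.finrank 𝕜 E = n) {k : Fin n} {x : E}
    (hx : ∀ i < k, ⟪hT.eigenvectorBasis hn i, x⟫_𝕜 = 0) :
    RCLike.re ⟪x, T x⟫_𝕜 ≤ hT.eigenvalues hn k * ‖x‖ ^ 2 := by
  rw [re_inner_apply_self_eq_sum hT hn, ← (hT.eigenvectorBasis hn).sum_sq_norm_inner_right, mul_sum]
  refine sum_le_sum fun i _ => ?_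
  rcases lt_or_ge i k with hik | hki
  · simp [hx i hik]
  · exact mul_le_mul_of_nonneg_right (hT.eigenvalues_antitone hn hki) (sq_nonneg _)

lemma le_re_inner_apply_self (hT : T.IsSymmetric) (hn : Module.finrank 𝕜 E = n) {k : Fin n} {x : E}
    (hx : ∀ i > k, ⟪hT.eigenvectorBasis hn i, x⟫_𝕜 = 0) :
    hT.eigenvalues hn k * ‖x‖ ^ 2 ≤ RCLike.re ⟪x, T x⟫_𝕜 := by
  rw [re_inner_apply_self_eq_sum hT hn, ← (hT.eigenvectorBasis hn).sum_sq_norm_inner_right, mul_sum]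
  refine sum_le_sum fun i _ => ?_
  rcases lt_or_ge k i with hki | hik
  · simp [hx i hki]
  · exact mul_le_mul_of_nonneg_right (hT.eigenvalues_antitone hn hik) (sq_nonneg _)

lemma eigenvalues_le_of_linearIsometry (hT : T.IsSymmetric) (hn : Module.finrank 𝕜 E = n)
    (hS : S.IsSymmetric) (hm : Module.finrank 𝕜 F = m) (φ : F →ₗᵢ[𝕜] E)
    (hφ : ∀ x, ⟪φ x, T (φ x)⟫_𝕜 = ⟪x, S x⟫_𝕜) (hmn : m ≤ n) (k : Fin m) :
    hS.eigenvalues hm k ≤ hT.eigenvalues hn (k.castLE hmn) := by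
  -- A nonzero `x` in the span of the first `k + 1` eigenvectors of `S` whose image is orthogonal to
  -- the first `k` eigenvectors of `T` exists because these are only `m - 1` conditions on `F`.
  let f : F →ₗ[𝕜] {j // j ≠ k} → 𝕜 := LinearMap.pi fun j =>
    if j.1 < k then (innerₛₗ 𝕜 (hT.eigenvectorBasis hn (j.1.castLE hmn))) ∘ₗ φ.toLinearMap else
      innerₛₗ 𝕜 (hS.eigenvectorBasis hm j.1)
  have hker : LinearMap.ker f ≠ ⊥ := by
    refine LinearMap.ker_ne_bot_of_finrank_lt ?_
    rw [hm, Module.finrank_fintype_fun_eq_card, Fintype.card_subtype_compl]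
    simpa using k.pos
  obtain ⟨x, hx, hx0⟩ := Submodule.exists_mem_ne_zero_of_ne_bot hker
  have hfx (j : Fin m) (hj : j ≠ k) := congrFun (LinearMap.mem_ker.mp hx) ⟨j, hj⟩
  have hlow := le_re_inner_apply_self hS hm (k := k) (x := x) fun i hi => by
    simpa [f, hi.not_gt] using hfx i hi.ne'
  have hup := re_inner_apply_self_le hT hn (k := k.castLE hmn) (x := φ x) fun i hi => by
    have hik : (⟨i, Fin.lt_def.mp hi |>.trans k.2⟩ : Fin m) < k := hi
    simpa [f, hik] using hfx _ hik.ne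
  rw [hφ, φ.norm_map] at hup
  exact le_of_mul_le_mul_right (hlow.trans hup) (by positivity)

end CourantFischer

section CauchyInterlacing

lemma eq_of_antitone_of_nodal_eq {R : Type*} [CommRing R] [IsDomain R] [LinearOrder R] {n : ℕ}
    {l m : Fin n → R} (hl : Antitone l) (hm : Antitone m)
    (h : nodal univ l = nodal univ m) : l = m := by
  have hroots (d : Fin n → R) : (nodal univ d).roots = (List.ofFn d : Multiset R) := by
    rw [nodal_eq, roots_prod _ _ (prod_ne_zero_iff.mpr fun i _ => X_sub_C_ne_zero _)]
    simp [Fin.univ_val_map]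
  have hperm := congrArg roots h
  rw [hroots, hroots, Multiset.coe_eq_coe] at hperm
  exact List.ofFn_injective (hperm.eq_of_sortedGE hl.sortedGE_ofFn hm.sortedGE_ofFn)

variable {n : ℕ} {A : Matrix (Fin n) (Fin n) ℝ}

lemma charpoly_eq_nodal_eigenvalues (hA : A.IsHermitian) :
    A.charpoly = nodal univ
      ((isSymmetric_toEuclideanLin_iff.mpr hA).eigenvalues finrank_euclideanSpace_fin) := by
  have h := (isSymmetric_toEuclideanLin_iff.mpr hA).charpoly_eq finrank_euclideanSpace_fin
  have hlin : (toEuclideanLin A).charpoly = A.charpoly := by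
    rw [toEuclideanLin, toLpLin_eq_toLin, charpoly_toLin]
  simpa [nodal_eq] using hlin.symm.trans h

lemma eigenvalue_compression_le {m : ℕ} (hA : A.IsHermitian) {l : Fin n → ℝ} (hl : Antitone l)
    (hlA : A.charpoly = nodal univ l) {J : Matrix (Fin n) (Fin m) ℝ} (hJ : Jᴴ * J = 1)
    {l' : Fin m → ℝ} (hl' : Antitone l') (hlJ : (Jᴴ * A * J).charpoly = nodal univ l')
    (hmn : m ≤ n) (k : Fin m) : l' k ≤ l (k.castLE hmn) := by
  obtain rfl := eq_of_antitone_of_nodal_eq hl (LinearMap.IsSymmetric.eigenvalues_antitone ..)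
    (hlA.symm.trans (charpoly_eq_nodal_eigenvalues hA))
  obtain rfl := eq_of_antitone_of_nodal_eq hl' (LinearMap.IsSymmetric.eigenvalues_antitone ..)
    (hlJ.symm.trans (charpoly_eq_nodal_eigenvalues (isHermitian_conjTranspose_mul_mul J hA)))
  have hinner (B : Matrix (Fin n) (Fin n) ℝ) (x y : EuclideanSpace ℝ (Fin m)) :
      ⟪toEuclideanLin J x, toEuclideanLin B (toEuclideanLin J y)⟫_ℝ =
        ⟪x, toEuclideanLin (Jᴴ * B * J) y⟫_ℝ := by
    have hmul : toEuclideanLin (Jᴴ * B * J) =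
        (toEuclideanLin J).adjoint ∘ₗ toEuclideanLin B ∘ₗ toEuclideanLin J := by
      rw [← toEuclideanLin_conjTranspose_eq_adjoint, Matrix.mul_assoc]
      exact (toLpLin_mul _ _ _ _ _).trans (congrArg _ (toLpLin_mul _ _ _ _ _))
    simp only [hmul, LinearMap.comp_apply, LinearMap.adjoint_inner_right]
  let φ : EuclideanSpace ℝ (Fin m) →ₗᵢ[ℝ] EuclideanSpace ℝ (Fin n) :=
    (toEuclideanLin J).isometryOfInner fun x y => by
      have h := hinner 1 x y
      rw [Matrix.mul_one, hJ] at h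
      simpa using h
  exact eigenvalues_le_of_linearIsometry _ _ _ _ φ (fun x => hinner A x x) hmn k

lemma eigenvalue_submatrix_le {m : ℕ} (hA : A.IsHermitian) {l : Fin n → ℝ} (hl : Antitone l)
    (hlA : A.charpoly = nodal univ l) {f : Fin m → Fin n} (hf : f.Injective)
    {l' : Fin m → ℝ} (hl' : Antitone l') (hlB : (A.submatrix f f).charpoly = nodal univ l')
    (hmn : m ≤ n) (k : Fin m) : l' k ≤ l (k.castLE hmn) := by
  let J : Matrix (Fin n) (Fin m) ℝ := (1 : Matrix (Fin n) (Fin n) ℝ).submatrix id f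
  have hJ : Jᴴ * J = 1 := by
    ext i j
    simp [J, mul_apply, one_apply, hf.eq_iff]
  have hJA : Jᴴ * A * J = A.submatrix f f := by
    ext i j
    simp [J, mul_apply, one_apply]
  exact eigenvalue_compression_le hA hl hlA hJ hl' (hJA ▸ hlB) hmn k

end CauchyInterlacing

section NonnegProducts

lemma exists_antitone_charpoly_eq_nodal {n : ℕ} {A : Matrix (Fin n) (Fin n) ℝ}
    (hA : A.IsHermitian) : ∃ l : Fin n → ℝ, Antitone l ∧ A.charpoly = nodal univ l :=
  ⟨_, LinearMap.IsSymmetric.eigenvalues_antitone .., charpoly_eq_nodal_eigenvalues hA⟩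

lemma adjugate_charmatrix_mem_newtonCone {n : ℕ} {A : Matrix (Fin n) (Fin n) ℝ}
    (hA : A.IsHermitian) (hA0 : ∀ i j, 0 ≤ A i j) {l : Fin n → ℝ} (hl : Antitone l)
    (hlA : A.charpoly = nodal univ l) (i j : Fin n) :
    A.charmatrix.adjugate i j ∈ newtonCone l := by
  induction n with
  | zero => exact i.elim0
  | succ n ih =>
    set B := A.submatrix i.succAbove i.succAbove
    have hB : B.IsHermitian := hA.submatrix _
    have hAB : A.charmatrix.submatrix i.succAbove i.succAbove = B.charmatrix :=
      charmatrix_submatrix A Fin.succAbove_right_injective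
    obtain ⟨m, hm, hmB⟩ := exists_antitone_charpoly_eq_nodal hB
    have hml (a b : Fin n) (hab : a ≤ b) : m b ≤ l a.castSucc :=
      (hm hab).trans <|
        eigenvalue_submatrix_le hA hl hlA Fin.succAbove_right_injective hm hmB n.le_succ a
    rcases Fin.eq_self_or_eq_succAbove i j with rfl | ⟨j, rfl⟩
    · rw [adjugate_apply_self, hAB, ← charpoly, hmB]
      exact nodal_univ_mem_newtonCone hml
    · rw [adjugate_apply_succAbove, hAB, ← sum_neg_distrib]
      refine sum_mem fun k _ => ?_
      have hsmul : -(A.charmatrix i (i.succAbove k) * B.charmatrix.adjugate k j) =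
          (A i (i.succAbove k)).toNNReal • B.charmatrix.adjugate k j := by
        rw [charmatrix_apply_ne _ _ _ (Fin.succAbove_ne i k).symm, NNReal.smul_def,
          Real.coe_toNNReal _ (hA0 _ _), smul_eq_C_mul, neg_mul, neg_neg]
      rw [hsmul]
      exact Submodule.smul_mem _ _ (newtonCone_le hml (ih hB (fun _ _ => hA0 _ _) hm hmB k j))

theorem aeval_nodal_Ioi_apply_nonneg {n : ℕ} {A : Matrix (Fin n) (Fin n) ℝ}
    (hA : A.IsHermitian) (hA0 : ∀ i j, 0 ≤ A i j) {l : Fin n → ℝ} (hl : Antitone l)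
    (hlA : A.charpoly = nodal univ l) (k i j : Fin n) : 0 ≤ aeval A (nodal (Ioi k) l) i j := by
  refine nonneg_of_sum_smul_mem_newtonCone (l := l)
    (a := fun k => aeval A (nodal (Ioi k) l) i j) ?_ k
  convert adjugate_charmatrix_mem_newtonCone hA hA0 hl hlA i j using 1
  simp [adjugate_charmatrix_eq_sum hlA, Matrix.sum_apply, smul_eq_C_mul, mul_comm]

end NonnegProducts

section Reversible

lemma aeval_units_conj {R A : Type*} [CommRing R] [Ring A] [Algebra R A] (u : Aˣ) (a : A)
    (p : R[X]) : aeval (u.val * a * u⁻¹.val) p = u.val * aeval a p * u⁻¹.val :=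
  aeval_algHom_apply (MulSemiringAction.toAlgHom R A (ConjAct.toConjAct u)) a p

/-- The Micchelli–Willoughby property: `l` lists the eigenvalues of `M` in decreasing order, and the
products `∏ j > k, (M - l j)` are entrywise nonnegative. The list is kept as an argument so that the
property is a closed condition on the pair `(M, l)`. -/
structure HasNonnegSpectralProducts {n : ℕ} (M : Matrix (Fin n) (Fin n) ℝ) (l : Fin n → ℝ) :
    Prop where
  antitone : Antitone l
  charpoly_eq : M.charpoly = nodal univ l
  nonneg : ∀ k i j, 0 ≤ aeval M (nodal (Ioi k) l) i j

lemma exists_hasNonnegSpectralProducts_of_reversible {n : ℕ} {M : Matrix (Fin n) (Fin n) ℝ}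
    (hM : ∀ i j, 0 ≤ M i j) {p : Fin n → ℝ} (hp : ∀ i, 0 < p i)
    (hrev : ∀ i j, p i * M i j = p j * M j i) : ∃ l, HasNonnegSpectralProducts M l := by
  have hs (i : Fin n) : 0 < √(p i) := Real.sqrt_pos.mpr (hp i)
  let D : (Matrix (Fin n) (Fin n) ℝ)ˣ :=
    ⟨diagonal fun i => √(p i), diagonal fun i => (√(p i))⁻¹, by simp [(hs _).ne'],
      by simp [(hs _).ne']⟩
  have hconj (B : Matrix (Fin n) (Fin n) ℝ) (i j : Fin n) :
      (D.val * B * D⁻¹.val) i j = √(p i) * B i j * (√(p j))⁻¹ := by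
    simp [D]
  set A : Matrix (Fin n) (Fin n) ℝ := D.val * M * D⁻¹.val with hA
  have hA0 (i j : Fin n) : 0 ≤ A i j := by
    have := hM i j
    rw [hA, hconj]
    positivity
  have hcharpoly : A.charpoly = M.charpoly := by
    rw [hA, coe_units_inv, charpoly_units_conj]
  have hAsymm : A.IsHermitian := by
    ext i j
    rw [conjTranspose_apply, star_trivial, hA, hconj, hconj, ← div_eq_mul_inv, ← div_eq_mul_inv,
      div_eq_div_iff (hs i).ne' (hs j).ne']
    have := hrev j i
    rw [← Real.mul_self_sqrt (hp i).le, ← Real.mul_self_sqrt (hp j).le] at this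
    linarith
  obtain ⟨l, hl, hlA⟩ := exists_antitone_charpoly_eq_nodal hAsymm
  refine ⟨l, hl, hcharpoly.symm.trans hlA, fun k i j => ?_⟩
  have h := aeval_nodal_Ioi_apply_nonneg hAsymm hA0 hl hlA k i j
  rw [hA, aeval_units_conj, hconj] at h
  exact nonneg_of_mul_nonneg_right (nonneg_of_mul_nonneg_left h (inv_pos.mpr (hs j))) (hs i)

end Reversible

section Closure

lemma exists_norm_le_sum_norm_of_hasEigenvalue {K ι : Type*} [NormedField K] [Fintype ι]
    [DecidableEq ι] {A : Matrix ι ι K} {z : K} (hz : Module.End.HasEigenvalue (toLin' A) z) :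
    ∃ i, ‖z‖ ≤ ∑ j, ‖A i j‖ := by
  obtain ⟨i, hi⟩ := eigenvalue_mem_ball hz
  refine ⟨i, (norm_le_norm_add_norm_sub' z (A i i)).trans ?_⟩
  rw [← add_sum_erase univ _ (mem_univ i)]
  gcongr
  exact mem_closedBall_iff_norm.mp hi

lemma abs_le_one_of_isRoot_charpoly {ι : Type*} [Fintype ι] [DecidableEq ι] {M : Matrix ι ι ℝ}
    (hM : M ∈ rowStochastic ℝ ι) {z : ℝ} (hz : M.charpoly.IsRoot z) : |z| ≤ 1 := by
  rw [← charpoly_toLin', ← Module.End.hasEigenvalue_iff_isRoot_charpoly] at hz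
  obtain ⟨i, hi⟩ := exists_norm_le_sum_norm_of_hasEigenvalue hz
  simpa only [Real.norm_of_nonneg (nonneg_of_mem_rowStochastic hM),
    sum_row_of_mem_rowStochastic hM, Real.norm_eq_abs] using hi

lemma continuous_aeval_nodal {R A κ : Type*} [CommRing R] [TopologicalSpace R] [Ring A]
    [Algebra R A] [TopologicalSpace A] [IsTopologicalRing A] [ContinuousSMul R A] (s : Finset κ) :
    Continuous fun q : A × (κ → R) => aeval q.1 (nodal s q.2) := by
  classical
  induction s using Finset.induction_on with
  | empty => simpa using continuous_const
  | insert k s hk ih =>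
    simp only [nodal_insert_eq_nodal hk, map_mul, map_sub, aeval_X, aeval_C,
      Algebra.algebraMap_eq_smul_one]
    fun_prop

lemma isClosed_hasNonnegSpectralProducts (n : ℕ) :
    IsClosed {q : Matrix (Fin n) (Fin n) ℝ × (Fin n → ℝ) | HasNonnegSpectralProducts q.1 q.2} := by
  have hchar (M : Matrix (Fin n) (Fin n) ℝ) (l : Fin n → ℝ) :
      M.charpoly = nodal univ l ↔ ∀ z, (scalar (Fin n) z - M).det = ∏ i, (z - l i) := by
    simp only [← eval_charpoly, ← eval_nodal]
    exact ⟨fun h z => h ▸ rfl, Polynomial.funext⟩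
  have hiff (q : Matrix (Fin n) (Fin n) ℝ × (Fin n → ℝ)) : HasNonnegSpectralProducts q.1 q.2 ↔
      Antitone q.2 ∧ (∀ z, (scalar (Fin n) z - q.1).det = ∏ i, (z - q.2 i)) ∧
        ∀ k i j, 0 ≤ aeval q.1 (nodal (Ioi k) q.2) i j :=
    ⟨fun h => ⟨h.1, (hchar _ _).mp h.2, h.3⟩, fun h => ⟨h.1, (hchar _ _).mpr h.2.1, h.2.2⟩⟩
  simp only [hiff, Set.ofPred_and, Set.ofPred_forall]
  refine .inter (isClosed_antitone.preimage continuous_snd) (.inter ?_ ?_)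
  · exact isClosed_iInter fun z => isClosed_eq (by fun_prop) (by fun_prop)
  · exact isClosed_iInter fun k => isClosed_iInter fun i => isClosed_iInter fun j =>
      isClosed_le continuous_const ((continuous_aeval_nodal (Ioi k)).matrix_elem i j)

lemma isClosed_rowStochastic {R ι : Type*} [Fintype ι] [DecidableEq ι] [Semiring R]
    [PartialOrder R] [IsOrderedRing R] [TopologicalSpace R] [IsTopologicalSemiring R]
    [OrderClosedTopology R] : IsClosed (rowStochastic R ι : Set (Matrix ι ι R)) := by
  have hset : (rowStochastic R ι : Set (Matrix ι ι R)) =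
      (⋂ i, ⋂ j, {M | 0 ≤ M i j}) ∩ {M | M *ᵥ 1 = 1} := by
    ext
    simp [mem_rowStochastic]
  rw [hset]
  refine .inter ?_ (isClosed_eq (by fun_prop) continuous_const)
  exact isClosed_iInter fun i => isClosed_iInter fun j =>
    isClosed_le continuous_const (by fun_prop)

lemma mem_rowStochastic_of_mem_revClosure {n : ℕ} {P : Matrix (Fin n) (Fin n) ℝ}
    (hP : P ∈ RevClosure n) : P ∈ rowStochastic ℝ (Fin n) :=
  closure_minimal (fun _ hM => mem_rowStochastic_iff_sum.mpr ⟨hM.1, hM.2.1⟩)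
    isClosed_rowStochastic hP

lemma exists_hasNonnegSpectralProducts_of_mem_revClosure {n : ℕ} {P : Matrix (Fin n) (Fin n) ℝ}
    (hP : P ∈ RevClosure n) : ∃ l, HasNonnegSpectralProducts P l := by
  have : FirstCountableTopology (Matrix (Fin n) (Fin n) ℝ) :=
    inferInstanceAs (FirstCountableTopology (Fin n → Fin n → ℝ))
  obtain ⟨M, hM, hMP⟩ := mem_closure_iff_seq_limit.mp hP
  choose hM0 hM1 p hp _ hrev using hM
  choose l hl using fun k => exists_hasNonnegSpectralProducts_of_reversible (hM0 k) (hp k) (hrev k)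
  have hlmem (k : ℕ) : l k ∈ Set.Icc (-1) 1 := by
    have habs (i : Fin n) : |l k i| ≤ 1 :=
      abs_le_one_of_isRoot_charpoly (mem_rowStochastic_iff_sum.mpr ⟨hM0 k, hM1 k⟩) <| by
        rw [(hl k).charpoly_eq]
        exact eval_nodal_at_node (mem_univ i)
    exact ⟨fun i => (abs_le.mp (habs i)).1, fun i => (abs_le.mp (habs i)).2⟩
  obtain ⟨m, -, φ, hφ, hm⟩ := isCompact_Icc.tendsto_subseq hlmem
  exact ⟨m, (isClosed_hasNonnegSpectralProducts n).mem_of_tendsto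
    ((hMP.comp hφ.tendsto_atTop).prodMk_nhds hm) (.of_forall fun k => hl (φ k))⟩

lemma aeval_nodal_Iio_apply_nonneg {n : ℕ} {P : Matrix (Fin n) (Fin n) ℝ} (hP : P ∈ RevClosure n)
    {β : Fin n → ℝ} (hβ : Monotone β) (hβP : P.charpoly = nodal univ β) (k i j : Fin n) :
    0 ≤ aeval P (nodal (Iio k) β) i j := by
  obtain ⟨l, hl⟩ := exists_hasNonnegSpectralProducts_of_mem_revClosure hP
  have hrev (s : Finset (Fin n)) :
      nodal s (β ∘ Fin.rev) = nodal (s.map Fin.revPerm.toEmbedding) β := by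
    simp [nodal_eq]
  obtain rfl : l = β ∘ Fin.rev := eq_of_antitone_of_nodal_eq hl.antitone
    (hβ.comp_antitone Fin.rev_anti) <| by
      rw [← hl.charpoly_eq, hβP, hrev, univ_map_equiv_to_embedding]
  simpa [hrev] using hl.nonneg k.rev i j

end Closure

section BirthChain

variable {R : Type*} [CommSemiring R] {n : ℕ}

/-- The sum of `∏ j, c j ^ (v j - 1)` over all `v` with positive entries at most `T` and total at
most `t`. For `t ≤ T`, its product with `∏ j, (1 - c j)` is the probability that independent
geometric variables with failure probabilities `c j` have sum at most `t`; the bound `T` is separate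
from `t` because the recursions lower `t` only. -/
def passageWeight (c : Fin n → R) (T t : ℕ) : R :=
  ∑ v : Fin n → Fin (T + 1),
    if (∀ j, 1 ≤ (v j : ℕ)) ∧ ∑ j, (v j : ℕ) ≤ t then ∏ j, c j ^ ((v j : ℕ) - 1) else 0

lemma passageWeight_fin_zero (c : Fin 0 → R) (T t : ℕ) : passageWeight c T t = 1 := by
  simp [passageWeight]

lemma passageWeight_cons (a : R) (c : Fin n → R) {T t : ℕ} (ht : t ≤ T) :
    passageWeight (Fin.cons a c : Fin (n + 1) → R) T t =
      ∑ u ∈ range t, a ^ u * passageWeight c T (t - (u + 1)) := by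
  have hrange : range t = {u ∈ range T | u < t} := by grind
  rw [hrange, sum_filter, sum_range, passageWeight, ← (Fin.consEquiv fun _ => Fin (T + 1)).sum_comp,
    Fintype.sum_prod_type, Fin.sum_univ_succ]
  simp only [Fin.consEquiv_apply, Fin.forall_fin_succ, Fin.sum_univ_succ, Fin.prod_univ_succ,
    Fin.cons_zero, Fin.cons_succ, Fin.val_zero, Fin.val_succ, nonpos_iff_eq_zero, one_ne_zero,
    false_and, if_false, sum_const_zero, zero_add]
  refine sum_congr rfl fun u _ => ?_
  have hcond (v : Fin n → Fin (T + 1)) :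
      ((1 ≤ (u + 1 : ℕ) ∧ ∀ j, 1 ≤ (v j : ℕ)) ∧ (u + 1 : ℕ) + ∑ j, (v j : ℕ) ≤ t) ↔
        (u : ℕ) < t ∧ (∀ j, 1 ≤ (v j : ℕ)) ∧ ∑ j, (v j : ℕ) ≤ t - (u + 1) := by
    grind
  simp only [hcond, ite_and _ (_ ∧ _), passageWeight, mul_sum, mul_ite, mul_zero,
    add_tsub_cancel_right]
  split_ifs <;> simp

lemma passageWeight_cons_zero (a : R) (c : Fin n → R) (T : ℕ) :
    passageWeight (Fin.cons a c : Fin (n + 1) → R) T 0 = 0 := by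
  rw [passageWeight_cons a c T.zero_le, range_zero, sum_empty]

lemma passageWeight_cons_succ (a : R) (c : Fin n → R) {T t : ℕ} (ht : t < T) :
    passageWeight (Fin.cons a c : Fin (n + 1) → R) T (t + 1) =
      a * passageWeight (Fin.cons a c : Fin (n + 1) → R) T t + passageWeight c T t := by
  rw [passageWeight_cons a c ht, passageWeight_cons a c ht.le, sum_range_succ', mul_sum]
  simp [pow_succ', mul_assoc]

lemma passageWeight_mul_le [PartialOrder R] [IsOrderedRing R] {c : Fin n → R} (hc : ∀ i, 0 ≤ c i)
    {x : Fin (n + 1) → ℕ → R} (hx0 : ∀ k, 0 ≤ x k 0)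
    (hx : ∀ i t, x i.castSucc (t + 1) = c i * x i.castSucc t + x i.succ t)
    (hlast : ∀ t, x (Fin.last n) (t + 1) = x (Fin.last n) t) {T t : ℕ} (ht : t ≤ T) :
    passageWeight c T t * x (Fin.last n) 0 ≤ x 0 t := by
  induction n generalizing t with
  | zero =>
    rw [passageWeight_fin_zero, one_mul]
    have hconst (s : ℕ) : x 0 s = x 0 0 := by
      induction s with
      | zero => rfl
      | succ s ih => exact (hlast s).trans ih
    exact (hconst t).ge
  | succ n ih =>
    obtain ⟨a, c, rfl⟩ : ∃ a c', c = Fin.cons a c' := ⟨c 0, Fin.tail c, by simp⟩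
    induction t with
    | zero => simpa [passageWeight_cons_zero] using hx0 0
    | succ t iht =>
      have htail : passageWeight c T t * x (Fin.last (n + 1)) 0 ≤ x 1 t :=
        ih (c := c) (x := fun k => x k.succ) (fun i => hc i.succ) (fun k => hx0 k.succ)
          (fun i => hx i.succ) hlast (Nat.le_of_succ_le ht)
      calc passageWeight (Fin.cons a c : Fin (n + 1) → R) T (t + 1) * x (Fin.last (n + 1)) 0
          = a * (passageWeight (Fin.cons a c : Fin (n + 1) → R) T t * x (Fin.last (n + 1)) 0) +
              passageWeight c T t * x (Fin.last (n + 1)) 0 := by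
            rw [passageWeight_cons_succ a c ht, add_mul, mul_assoc]
        _ ≤ a * x 0 t + x 1 t := by
            gcongr
            · exact hc 0
            · exact iht (Nat.le_of_succ_le ht)
        _ = x 0 (t + 1) := (hx 0 t).symm

lemma passageWeight_mul_prod_one_sub {R : Type*} [CommRing R] {n : ℕ} (c : Fin n → R) (T t : ℕ) :
    passageWeight c T t * ∏ j, (1 - c j) = ∑ v : Fin n → Fin (T + 1),
      if (∀ j, 1 ≤ (v j : ℕ)) ∧ ∑ j, (v j : ℕ) ≤ t then
        ∏ j, c j ^ ((v j : ℕ) - 1) * (1 - c j) else 0 := by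
  simp only [passageWeight, sum_mul, ite_mul, zero_mul, prod_mul_distrib]

end BirthChain

section Stationary

lemma vecMul_aeval_of_vecMul_eq {R ι : Type*} [CommSemiring R] [Fintype ι] [DecidableEq ι]
    {M : Matrix ι ι R} {v : ι → R} {a : R} (hv : v ᵥ* M = a • v) (p : R[X]) :
    v ᵥ* aeval M p = p.eval a • v := by
  induction p using Polynomial.induction_on with
  | C b => simp [Algebra.algebraMap_eq_smul_one, vecMul_smul]
  | add p q hp hq => rw [map_add, vecMul_add, hp, hq, eval_add, add_smul]
  | monomial k b h =>
    rw [pow_succ, ← mul_assoc, map_mul, aeval_X, ← vecMul_vecMul, h, smul_vecMul, hv, smul_smul,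
      eval_mul_X]

lemma rootMultiplicity_nodal_le_one {R κ : Type*} [CommRing R] [IsDomain R]
    {s : Finset κ} {l : κ → R} {k : κ} (hk : k ∈ s) (h : ∀ i ∈ s, i ≠ k → l i ≠ l k) :
    (nodal s l).rootMultiplicity (l k) ≤ 1 := by
  classical
  by_contra! hlt
  have hroot := ((one_lt_rootMultiplicity_iff_isRoot nodal_ne_zero).mp hlt).2
  rw [IsRoot, eval_nodal_derivative_eval_node_eq hk, eval_nodal, prod_eq_zero_iff] at hroot
  obtain ⟨i, hi, hik⟩ := hroot
  exact h i (mem_of_mem_erase hi) (ne_of_mem_erase hi) (sub_eq_zero.mp hik).symm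

lemma exists_smul_eq_of_mulVec_eq {K ι : Type*} [Field K] [Fintype ι] [DecidableEq ι]
    {M : Matrix ι ι K} {a : K} (ha : M.charpoly.rootMultiplicity a ≤ 1) {u v : ι → K} (hu0 : u ≠ 0)
    (hu : M *ᵥ u = a • u) (hv : M *ᵥ v = a • v) : ∃ c : K, c • u = v := by
  have hle : Module.finrank K (Module.End.eigenspace (toLin' M) a) ≤ 1 :=
    (LinearMap.finrank_eigenspace_le _ _).trans (by rwa [charpoly_toLin'])
  let u' : Module.End.eigenspace (toLin' M) a := ⟨u, Module.End.mem_eigenspace_iff.mpr hu⟩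
  have hu' : u' ≠ 0 := fun h => hu0 (congrArg Subtype.val h)
  have hdim := le_antisymm hle (Module.finrank_pos_iff_exists_ne_zero.mpr ⟨u', hu'⟩)
  obtain ⟨c, hc⟩ := exists_smul_eq_of_finrank_eq_one hdim hu'
    ⟨v, Module.End.mem_eigenspace_iff.mpr hv⟩
  exact ⟨c, congrArg Subtype.val hc⟩

lemma aeval_nodal_erase_apply {K ι κ : Type*} [Field K] [Fintype ι] [DecidableEq ι] [Fintype κ]
    [DecidableEq κ] {P : Matrix ι ι K} {β : κ → K} (hβP : P.charpoly = nodal univ β)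
    (hP1 : P *ᵥ 1 = 1) {p : ι → K} (hp : p ᵥ* P = p) (hp1 : ∑ i, p i = 1) {k : κ}
    (hk : β k = 1) (hne : ∀ i ≠ k, β i ≠ 1) (i j : ι) :
    aeval P (nodal (univ.erase k) β) i j = (∏ i ∈ univ.erase k, (1 - β i)) * p j := by
  set S := aeval P (nodal (univ.erase k) β) with hS
  have hroot : P.charpoly.rootMultiplicity 1 ≤ 1 := by
    rw [hβP, ← hk]
    exact rootMultiplicity_nodal_le_one (mem_univ k) fun i _ hi => hk ▸ hne i hi
  have hPS : P * S = S := by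
    have h : aeval P ((X - C (β k)) * nodal (univ.erase k) β) = 0 := by
      rw [← nodal_eq_mul_nodal_erase (mem_univ k), ← hβP, aeval_self_charpoly]
    rw [hk, map_mul] at h
    simpa [sub_mul, sub_eq_zero] using h
  have : Nonempty ι := ⟨i⟩
  obtain ⟨c, hc⟩ := exists_smul_eq_of_mulVec_eq (v := fun i => S i j) hroot one_ne_zero
    (by rw [hP1, one_smul]) (by rw [one_smul]; exact funext fun i => congr_fun₂ hPS i j)
  have hrow : (p ᵥ* S) j = (∏ i ∈ univ.erase k, (1 - β i)) * p j := by
    rw [hS, vecMul_aeval_of_vecMul_eq (a := 1) (by rw [hp, one_smul]), eval_nodal,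
      Pi.smul_apply, smul_eq_mul]
  have hSc (i : ι) : S i j = c := by simpa using (congrFun hc i).symm
  rw [← hrow, vecMul, dotProduct]
  simp only [hSc, ← sum_mul, hp1, one_mul]

end Stationary

section Chain

lemma passageWeight_mul_aeval_nodal_apply_le {n : ℕ} {P : Matrix (Fin (n + 1)) (Fin (n + 1)) ℝ}
    (hP : P ∈ RevClosure (n + 1)) {β : Fin (n + 1) → ℝ} (hβ : Monotone β)
    (hβP : P.charpoly = nodal univ β) (hβ0 : ∀ j, 0 ≤ β j) (hlast : β (Fin.last n) = 1)
    (t : ℕ) (i j : Fin (n + 1)) :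
    passageWeight (β ∘ Fin.castSucc) t t * aeval P (nodal (Iio (Fin.last n)) β) i j ≤
      (P ^ t) i j := by
  have hstep (k : Fin (n + 1)) (t : ℕ) : aeval P (nodal (Iio k) β) * P ^ (t + 1) =
      β k • (aeval P (nodal (Iio k) β) * P ^ t) + aeval P (nodal (Iic k) β) * P ^ t := by
    have h := congrArg (aeval P) (X_mul_nodal_Iio β k)
    rw [mul_comm X, map_mul, aeval_X, map_add, map_smul] at h
    rw [pow_succ', ← mul_assoc, h, add_mul, smul_mul_assoc]
    exact add_comm _ _
  have hIic_last : Iic (Fin.last n) = univ := Iic_top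
  have hle := passageWeight_mul_le (c := β ∘ Fin.castSucc) (T := t)
    (x := fun k t => (aeval P (nodal (Iio k) β) * P ^ t) i j) (fun k => hβ0 k.castSucc)
    (fun k => by simpa using aeval_nodal_Iio_apply_nonneg hP hβ hβP k i j)
    (fun k s => by
      simp only [hstep k.castSucc, Iio_succ_eq_Iic_castSucc, Matrix.add_apply, Matrix.smul_apply,
        smul_eq_mul, Function.comp_apply])
    (fun s => by
      simp only [hstep (Fin.last n), hlast, one_smul, hIic_last, ← hβP, aeval_self_charpoly,
        zero_mul, add_zero]) le_rfl
  have hIio_zero : Iio (0 : Fin (n + 1)) = ∅ := Iio_bot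
  simpa only [hIio_zero, nodal_empty, map_one, one_mul, pow_zero, mul_one] using hle

lemma passageWeight_mul_prod_one_sub_mul_le {n : ℕ} {P : Matrix (Fin (n + 1)) (Fin (n + 1)) ℝ}
    (hP : P ∈ RevClosure (n + 1)) {β : Fin (n + 1) → ℝ} (hβ : Monotone β)
    (hβP : P.charpoly = nodal univ β) (hβ0 : ∀ j, 0 ≤ β j) (hlast : β (Fin.last n) = 1)
    (hne : ∀ j ≠ Fin.last n, β j ≠ 1) {p : Fin (n + 1) → ℝ} (hp : p ᵥ* P = p)
    (hp1 : ∑ i, p i = 1) (t : ℕ) (i j : Fin (n + 1)) :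
    passageWeight (β ∘ Fin.castSucc) t t * (∏ k : Fin n, (1 - β k.castSucc)) * p j ≤
      (P ^ t) i j := by
  have herase : univ.erase (Fin.last n) = Iio (Fin.last n) := by
    ext
    simp only [mem_Iio, mem_erase, mem_univ, Fin.lt_last_iff_ne_last, and_true]
  have hS : aeval P (nodal (Iio (Fin.last n)) β) i j =
      (∏ k : Fin n, (1 - β k.castSucc)) * p j := by
    rw [← herase, aeval_nodal_erase_apply hβP (mem_rowStochastic_of_mem_revClosure hP).2 hp hp1
      hlast hne, herase, Fin.Iio_last_eq_map, prod_map]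
    rfl
  rw [mul_assoc, ← hS]
  exact passageWeight_mul_aeval_nodal_apply_le hP hβ hβP hβ0 hlast t i j

end Chain

end MicchelliWilloughby

/-- Theorem 1.4 of the paper: for reversible `P` with nonnegative eigenvalues
`0 ≤ β_1 ≤ ⋯ ≤ β_{N-1} < β_N = 1`, any initial distribution `μ`, and any `t ≥ 0`,
the separation distance satisfies `d_sep(μP^t, π) ≤ P(τ_1 + ⋯ + τ_{N-1} > t)`, where
the `τ_j` are independent geometrics with `P(τ_j = s) = β_j^{s-1}(1-β_j)`.  The
right-hand side is written as `1` minus the explicit probability that the sum of the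
geometrics is at most `t`, and the separation bound is stated for each state `x`
with `π(x) > 0`. -/
theorem separation_bound (N : ℕ) (hN : 2 ≤ N)
    (P : Matrix (Fin N) (Fin N) ℝ) (hPcl : P ∈ RevClosure N)
    (piv : Fin N → ℝ) (hpiv0 : ∀ i, 0 ≤ piv i) (hpiv1 : ∑ i, piv i = 1)
    (hstat : ∀ j, ∑ i, piv i * P i j = piv j)
    (hrev : ∀ i j, piv i * P i j = piv j * P j i)
    (β : Fin N → ℝ)
    (hchar : P.charpoly = ∏ j, (Polynomial.X - Polynomial.C (β j)))
    (hmono : Monotone β) (hβ0 : ∀ j, 0 ≤ β j)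
    (hβlt : ∀ j : Fin N, (j : ℕ) < N - 1 → β j < 1)
    (hβlast : ∀ j : Fin N, (j : ℕ) = N - 1 → β j = 1)
    (μ : Fin N → ℝ) (hμ0 : ∀ x, 0 ≤ μ x) (hμ1 : ∑ x, μ x = 1)
    (t : ℕ) (x : Fin N) (hx : 0 < piv x) :
    1 - (∑ y, μ y * (P ^ t) y x) / piv x ≤
      1 - ∑ v : Fin (N - 1) → Fin (t + 1),
        if (∀ j, 1 ≤ ((v j : ℕ))) ∧ (∑ j, (v j : ℕ)) ≤ t then
          ∏ j : Fin (N - 1), β ⟨(j : ℕ), by omega⟩ ^ ((v j : ℕ) - 1)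
            * (1 - β ⟨(j : ℕ), by omega⟩)
        else 0 := by
  obtain ⟨n, rfl⟩ : ∃ n, N = n + 1 := ⟨N - 1, by omega⟩
  have hβP : P.charpoly = Lagrange.nodal Finset.univ β := hchar
  have hlast : β (Fin.last n) = 1 := hβlast _ rfl
  have hne (j : Fin (n + 1)) (hj : j ≠ Fin.last n) : β j ≠ 1 :=
    (hβlt j (Fin.val_lt_last hj)).ne
  set F := MicchelliWilloughby.passageWeight (β ∘ Fin.castSucc) t t *
    ∏ j : Fin n, (1 - β j.castSucc)
  have hpow (y : Fin (n + 1)) : F * piv x ≤ (P ^ t) y x :=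
    MicchelliWilloughby.passageWeight_mul_prod_one_sub_mul_le hPcl hmono hβP hβ0 hlast hne
      (funext hstat) hpiv1 t y x
  have hF : F ≤ (∑ y, μ y * (P ^ t) y x) / piv x := by
    rw [le_div_iff₀ hx, ← one_mul (F * piv x), ← hμ1, Finset.sum_mul]
    exact Finset.sum_le_sum fun y _ => mul_le_mul_of_nonneg_left (hpow y) (hμ0 y)
  exact sub_le_sub_left
    ((MicchelliWilloughby.passageWeight_mul_prod_one_sub (β ∘ Fin.castSucc) t t).ge.trans hF) 1
end
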